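/- arXiv:0807.2686 — 5 statements merged into one kernel-verified Lean document; each statement's English description precedes it below -/
import Mathlib

section
/- Let (S, n) be a Cohen–Macaulay local ring of dimension d with infinite residue field and let R = S/p, where p is a minimal prime ideal of S. Let x_1, …, x_d be a system of parameters of R. Then there exists a system of parameters a_1, …, a_d of S such that x_i = a_i + p for each i. -/
open IsLocalRing

/-- The depth of a module over a local ring: the supremum of the lengths of
`M`-regular sequences contained in the maximal ideal. -/
noncomputable def moduleDepth (R M : Type*) [CommRing R] [IsLocalRing R]
    [AddCommGroup M] [Module R M] : ℕ∞ :=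
  sSup {n : ℕ∞ | ∃ rs : List R, (∀ r ∈ rs, r ∈ maximalIdeal R) ∧
    RingTheory.Sequence.IsRegular (R := R) M rs ∧ (rs.length : ℕ∞) = n}

/-- A local ring is Cohen–Macaulay if its depth equals its Krull dimension. -/
def IsCohenMacaulayLocalRing (R : Type*) [CommRing R] [IsLocalRing R] : Prop :=
  (moduleDepth R R : WithBot ℕ∞) = ringKrullDim R

/-- Every chain of primes above `I` has length at most `n`. -/
def ChainLE {S : Type*} [CommRing S] (I : Ideal S) (n : ℕ) : Prop :=
  ∀ l : LTSeries (PrimeSpectrum S), I ≤ l.head.asIdeal → l.length ≤ n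

theorem chainLE_of_radical {S : Type*} [CommRing S] [IsLocalRing S] [IsNoetherianRing S]
    (Q : Ideal S) [hQ : Q.IsPrime] (n : ℕ) (c : Fin n → S)
    (h : maximalIdeal S ≤ (Q ⊔ Ideal.span (Set.range c)).radical)
    (hc : ∀ i, c i ∈ maximalIdeal S) : ChainLE Q n := by
  intro l hl
  have hmem : ∀ i, l i ∈ PrimeSpectrum.zeroLocus (R := S) Q := by
    intro i
    exact hl.trans (LTSeries.head_le l i)
  have hloc : IsLocalRing (S ⧸ Q) :=
    IsLocalRing.of_surjective' (Ideal.Quotient.mk Q) Ideal.Quotient.mk_surjective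
  have hdim : ringKrullDim (S ⧸ Q) ≤ (n : ℕ∞) := by
    rw [← IsLocalRing.maximalIdeal_height_eq_ringKrullDim]
    norm_cast
    have hmin : maximalIdeal (S ⧸ Q) ∈
        (Ideal.span (Set.range fun i => Ideal.Quotient.mk Q (c i))).minimalPrimes := by
      refine ⟨⟨inferInstance, ?_⟩, ?_⟩
      · rw [Ideal.span_le]
        rintro _ ⟨i, rfl⟩
        have hmax : (maximalIdeal (S ⧸ Q)).comap (Ideal.Quotient.mk Q) = maximalIdeal S :=
          IsLocalRing.eq_maximalIdeal
            (Ideal.comap_isMaximal_of_surjective _ Ideal.Quotient.mk_surjective)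
        exact hmax.ge (hc i)
      · rintro P ⟨hP, hle⟩ -
        have h1 : Q ⊔ Ideal.span (Set.range c) ≤ P.comap (Ideal.Quotient.mk Q) := by
          refine sup_le (fun y hy => ?_) (Ideal.span_le.2 ?_)
          · rw [Ideal.mem_comap, Ideal.Quotient.eq_zero_iff_mem.2 hy]
            exact P.zero_mem
          · rintro _ ⟨i, rfl⟩
            exact hle (Ideal.subset_span ⟨i, rfl⟩)
        have h2 : maximalIdeal S ≤ P.comap (Ideal.Quotient.mk Q) :=
          h.trans ((hP.comap _).radical_le_iff.2 h1)
        intro y hy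
        obtain ⟨y, rfl⟩ := Ideal.Quotient.mk_surjective y
        exact h2 (fun hu => hy (hu.map _))
    refine (Ideal.height_le_spanRank_toENat_of_mem_minimalPrimes _ _ hmin).trans ?_
    have := Submodule.spanFinrank_span_le_ncard_of_finite (R := S ⧸ Q)
      (Set.finite_range fun i => Ideal.Quotient.mk Q (c i))
    have h3 : (Set.range fun i => Ideal.Quotient.mk Q (c i)).ncard ≤ n := by
      rw [← Set.image_univ]
      refine (Set.ncard_image_le Set.finite_univ).trans ?_
      simp
    rw [Submodule.fg_iff_spanRank_eq_spanFinrank.mpr (IsNoetherian.noetherian _), map_natCast]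
    exact_mod_cast this.trans h3
  rw [ringKrullDim_quotient] at hdim
  let l' : LTSeries (PrimeSpectrum.zeroLocus (R := S) Q) :=
    ⟨l.length, fun i => ⟨l i, hmem i⟩, fun i => l.step i⟩
  have := (Order.LTSeries.length_le_krullDim l').trans hdim
  exact_mod_cast this

theorem exists_avoid {S : Type*} [CommRing S] (I p : Ideal S) (b : S) (F : Set (Ideal S))
    (hF : F ⊆ I.minimalPrimes) (hfin : F.Finite)
    (h : ∀ Q ∈ F, p ≤ Q → b ∉ Q) : ∃ q ∈ p, ∀ Q ∈ F, b + q ∉ Q := by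
  classical
  let A := hfin.toFinset.filter (fun Q => b ∈ Q)
  let B := hfin.toFinset.filter (fun Q => b ∉ Q)
  have hprime : ∀ Q ∈ F, Q.IsPrime := fun Q hQ => (hF hQ).1.1
  have key : ¬ ((p ⊓ B.inf id : Ideal S) : Set S) ⊆ ⋃ Q ∈ (A : Set (Ideal S)), (id Q : Ideal S) := by
    rw [Ideal.subset_union_prime (f := id) ⊥ ⊥ (fun Q hQ _ _ => hprime Q (by
      have hQ' : Q ∈ F ∧ b ∈ Q := by simpa [A] using hQ
      exact hQ'.1))]
    rintro ⟨Q, hQ, hle⟩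
    have hQ' : Q ∈ F ∧ b ∈ Q := by simpa [A] using hQ
    have hP := hprime Q hQ'.1
    rcases hP.inf_le.1 hle with h1 | h1
    · exact h Q hQ'.1 h1 hQ'.2
    · obtain ⟨Q', hQB, hle'⟩ := (Ideal.IsPrime.inf_le' hP).1 h1
      have hB' : Q' ∈ F ∧ b ∉ Q' := by simpa [B] using hQB
      have := (hF hQ'.1).2 (hF hB'.1).1 hle'
      exact hB'.2 (this hQ'.2)
  obtain ⟨q, hq, hqA⟩ := Set.not_subset.1 key
  refine ⟨q, hq.1, fun Q hQ hbq => ?_⟩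
  by_cases hb : b ∈ Q
  · apply hqA
    simp only [Set.mem_iUnion]
    exact ⟨Q, by simp [A, hQ, hb], (Ideal.add_mem_iff_right Q hb).1 hbq⟩
  · have hqQ : q ∈ Q := by
      have : B.inf id ≤ Q := Finset.inf_le (f := id) (by simp [B, hQ, hb])
      exact this hq.2
    exact hb ((Ideal.add_mem_iff_left Q hqQ).1 hbq)

theorem lift_aux {S : Type*} [CommRing S] [IsLocalRing S] [IsNoetherianRing S] (p : Ideal S)
    (n : ℕ) : ∀ (I : Ideal S) (b : Fin n → S),
    (I ⊔ p ⊔ Ideal.span (Set.range b)).radical = maximalIdeal S → ChainLE I n →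
    ∃ q : Fin n → S, (∀ i, q i ∈ p) ∧
      (I ⊔ Ideal.span (Set.range fun i => b i + q i)).radical = maximalIdeal S := by
  induction n with
  | zero =>
    intro I b hb hI
    refine ⟨fun _ => 0, fun i => i.elim0, ?_⟩
    have hIm : I ≤ maximalIdeal S :=
      (le_sup_left.trans le_sup_left).trans (Ideal.le_radical.trans hb.le)
    simp only [Set.range_eq_empty, Ideal.span_empty, sup_bot_eq]
    refine le_antisymm ((maximalIdeal.isMaximal S).isPrime.radical_le_iff.2 hIm) ?_
    rw [Ideal.radical_eq_sInf]
    refine le_sInf ?_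
    rintro P ⟨hIP, hP⟩
    by_contra hne
    have hlt : (⟨P, hP⟩ : PrimeSpectrum S) < ⟨maximalIdeal S, inferInstance⟩ :=
      lt_of_le_not_ge (IsLocalRing.le_maximalIdeal hP.ne_top) hne
    obtain ⟨m, hm⟩ : ∃ m : LTSeries (PrimeSpectrum S),
        m.head = ⟨maximalIdeal S, inferInstance⟩ := ⟨RelSeries.singleton _ _, rfl⟩
    rw [← hm] at hlt
    have := hI (RelSeries.cons m ⟨P, hP⟩ hlt) (by simpa using hIP)
    simp at this
  | succ n ih =>
    intro I b hb hI
    have hle : I ⊔ p ⊔ Ideal.span (Set.range b) ≤ maximalIdeal S := Ideal.le_radical.trans hb.le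
    have hbm : ∀ i, b i ∈ maximalIdeal S := fun i =>
      hle (Ideal.mem_sup_right (Ideal.subset_span ⟨i, rfl⟩))
    have hspan : Ideal.span (Set.range b) =
        Ideal.span {b 0} ⊔ Ideal.span (Set.range (Fin.tail b)) := by
      rw [← Fin.cons_self_tail b, Fin.range_cons, Ideal.span_insert]
      simp
    obtain ⟨q, hq, hav⟩ := exists_avoid I p (b 0) {Q ∈ I.minimalPrimes | ¬ ChainLE Q n}
      (fun Q hQ => hQ.1) ((Ideal.finite_minimalPrimes_of_isNoetherianRing S I).subset
        (fun Q hQ => hQ.1)) (by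
        rintro Q ⟨hQ, hnot⟩ hpQ hbQ
        have := hQ.1.1
        refine hnot (chainLE_of_radical Q n (Fin.tail b) ?_ (fun i => hbm _))
        rw [← hb, hspan]
        refine Ideal.radical_mono (sup_le (sup_le ?_ ?_) (sup_le ?_ ?_))
        · exact hQ.1.2.trans le_sup_left
        · exact hpQ.trans le_sup_left
        · exact ((Ideal.span_singleton_le_iff_mem _).2 hbQ).trans le_sup_left
        · exact le_sup_right)
    obtain ⟨q', hq', hrad⟩ := ih (I ⊔ Ideal.span {b 0 + q}) (Fin.tail b) (by
        rw [← hb, hspan]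
        congr 1
        have h0 : Ideal.span {b 0 + q} ⊔ p = Ideal.span {b 0} ⊔ p := by
          apply le_antisymm <;> refine sup_le ?_ le_sup_right <;>
            rw [Ideal.span_singleton_le_iff_mem]
          · exact add_mem (Ideal.mem_sup_left (Ideal.mem_span_singleton_self _))
              (Ideal.mem_sup_right hq)
          · have h1 : b 0 + q ∈ Ideal.span {b 0 + q} ⊔ p :=
              Ideal.mem_sup_left (Ideal.mem_span_singleton_self (b 0 + q))
            have h2 : q ∈ Ideal.span {b 0 + q} ⊔ p := Ideal.mem_sup_right hq
            simpa using sub_mem h1 h2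
        rw [sup_assoc I, h0]
        ac_rfl) (by
        intro l hl
        obtain ⟨Q, hQ, hQl⟩ := Ideal.exists_minimalPrimes_le (J := l.head.asIdeal)
          (le_sup_left.trans hl)
        by_cases hc : ChainLE Q n
        · exact hc l hQl
        · have hnm := hav Q ⟨hQ, hc⟩
          have hml : b 0 + q ∈ l.head.asIdeal :=
            hl (Ideal.mem_sup_right (Ideal.mem_span_singleton_self _))
          have hlt : (⟨Q, hQ.1.1⟩ : PrimeSpectrum S) < l.head :=
            lt_of_le_not_ge hQl (fun h => hnm (h hml))
          have := hI (RelSeries.cons l ⟨Q, hQ.1.1⟩ hlt) (by simpa using hQ.1.2)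
          simp at this
          exact this)
    refine ⟨Fin.cons q q', fun i => Fin.cases hq hq' i, ?_⟩
    rw [← hrad, sup_assoc, ← Ideal.span_union]
    congr 3
    ext y
    simp [Fin.exists_fin_succ, Fin.tail, eq_comm]

/-- **Lifting systems of parameters.** Let `(S, 𝔫)` be a Cohen–Macaulay local ring of
dimension `d` with infinite residue field and let `R = S/𝔭`, where `𝔭` is a minimal prime
of `S`. Every system of parameters `x₁, …, x_d` of `R` lifts to a system of parameters
`a₁, …, a_d` of `S` with `xᵢ = aᵢ + 𝔭`. -/
theorem lifting_sop {S : Type*} [CommRing S] [IsLocalRing S] [IsNoetherianRing S]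
    [Infinite (ResidueField S)]
    (hCM : IsCohenMacaulayLocalRing S)
    (d : ℕ) (hdim : ringKrullDim S = (d : WithBot ℕ∞))
    (p : Ideal S) (hp : p ∈ minimalPrimes S)
    [IsLocalRing (S ⧸ p)]
    (x : Fin d → S ⧸ p)
    (hx : (Ideal.span (Set.range x)).radical = maximalIdeal (S ⧸ p)) :
    ∃ a : Fin d → S,
      (Ideal.span (Set.range a)).radical = maximalIdeal S ∧
      ∀ i, Ideal.Quotient.mk p (a i) = x i := by
  obtain ⟨b, hb⟩ : ∃ b : Fin d → S, ∀ i, Ideal.Quotient.mk p (b i) = x i :=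
    ⟨fun i => (Ideal.Quotient.mk_surjective (x i)).choose,
      fun i => (Ideal.Quotient.mk_surjective (x i)).choose_spec⟩
  have hmax : (maximalIdeal (S ⧸ p)).comap (Ideal.Quotient.mk p) = maximalIdeal S :=
    IsLocalRing.eq_maximalIdeal
      (Ideal.comap_isMaximal_of_surjective _ Ideal.Quotient.mk_surjective)
  obtain ⟨q, hq, hr⟩ := lift_aux p d ⊥ b (by
    rw [← hmax, ← hx, Ideal.comap_radical]
    congr 1
    have : Set.range x = Ideal.Quotient.mk p '' Set.range b := by
      rw [← Set.range_comp]
      congr 1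
      funext i
      exact (hb i).symm
    rw [this, ← Ideal.map_span, Ideal.comap_map_of_surjective' _ Ideal.Quotient.mk_surjective,
      Ideal.mk_ker, bot_sup_eq, sup_comm]) (by
    intro l _
    have := (Order.LTSeries.length_le_krullDim l).trans hdim.le
    exact_mod_cast this)
  refine ⟨fun i => b i + q i, by simpa using hr, fun i => ?_⟩
  rw [map_add, hb, Ideal.Quotient.eq_zero_iff_mem.2 (hq i), add_zero]
end

section
/- Let S be a Noetherian ring and L an ideal of S of codimension zero (height 0) without embedded components (i.e., every associated prime of L is a minimal prime of L), and let R = S/L. Then there is an embedding of R into a finitely generated free S-module if and only if L = 0 : (0 : L). -/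
/-- **Proposition 3.6.** Let `S` be a Noetherian ring and `L` an ideal of codimension zero
(some minimal prime of `S` contains `L`) without embedded components (every associated
prime of `S/L` is a minimal prime of `L`). Then `R = S/L` embeds into a finitely
generated free `S`-module if and only if `L = 0 : (0 : L)`. -/
theorem embeds_in_free_iff_double_annihilator {S : Type*} [CommRing S] [IsNoetherianRing S]
    (L : Ideal S)
    (hht : ∃ p ∈ minimalPrimes S, L ≤ p)
    (hunmixed : ∀ p ∈ associatedPrimes S (S ⧸ L), p ∈ L.minimalPrimes) :
    (∃ (n : ℕ) (f : (S ⧸ L) →ₗ[S] (Fin n → S)), Function.Injective f) ↔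
      L = (Submodule.annihilator (Submodule.annihilator L : Ideal S)) := by
  constructor
  · rintro ⟨n, f, hf⟩
    apply le_antisymm
    · intro s hs
      rw [Submodule.mem_annihilator]
      intro t ht
      have h := Submodule.mem_annihilator.1 ht s hs
      simpa [mul_comm] using h
    · intro s hs
      have key : ∀ t : S, f (Ideal.Quotient.mk L t) = t • f 1 := by
        intro t
        rw [← map_smul, Algebra.smul_def, mul_one]
        rfl
      rw [← Ideal.Quotient.eq_zero_iff_mem]
      apply hf
      rw [map_zero, key]
      funext i
      refine Submodule.mem_annihilator.1 hs (f 1 i) ?_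
      rw [Submodule.mem_annihilator]
      intro l hl
      have h := key l
      rw [Ideal.Quotient.eq_zero_iff_mem.2 hl, map_zero] at h
      have h2 := congrFun h i
      simp only [Pi.zero_apply, Pi.smul_apply, smul_eq_mul] at h2
      rw [smul_eq_mul, mul_comm, ← h2]
  · intro hL
    obtain ⟨n, g, hg⟩ := Submodule.fg_iff_exists_fin_generating_family.1
      (IsNoetherian.noetherian (Submodule.annihilator L : Ideal S))
    let F : S →ₗ[S] (Fin n → S) := LinearMap.toSpanSingleton S (Fin n → S) g
    have hF : LinearMap.ker F = L := by
      ext s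
      conv_rhs => rw [hL, ← hg, Submodule.mem_annihilator_span]
      rw [LinearMap.mem_ker, LinearMap.toSpanSingleton_apply, funext_iff]
      simp
    refine ⟨n, Submodule.liftQ L F hF.ge, ?_⟩
    rw [← LinearMap.ker_eq_bot]
    exact Submodule.ker_liftQ_eq_bot _ _ _ hF.le
end

section
/- Let (R, m) be a universally catenary Noetherian local integral domain and let E be a balanced big Cohen–Macaulay R-module. For any set X of indeterminates, let B = R[X]_{m·R[X]} be the localization of the polynomial ring R[X] at the extension of m. Then B ⊗_R E is a balanced big Cohen–Macaulay B-module. -/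
open IsLocalRing

/-- A list of prime ideals forming a saturated chain from `p` to `q`. -/
def IsSaturatedPrimeChain (A : Type*) [CommRing A] (p q : Ideal A) (c : List (Ideal A)) :
    Prop :=
  (∀ r ∈ c, r.IsPrime) ∧ c.head? = some p ∧ c.getLast? = some q ∧
    c.Chain' (fun a b => a < b ∧ ∀ r : Ideal A, r.IsPrime → ¬(a < r ∧ r < b))

/-- A ring is catenary if for every pair of primes `p ≤ q`, all saturated chains of primes
from `p` to `q` have the same length. -/
def IsCatenaryRing (A : Type*) [CommRing A] : Prop :=
  ∀ p q : Ideal A, p.IsPrime → q.IsPrime → p ≤ q →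
    ∀ c₁ c₂ : List (Ideal A), IsSaturatedPrimeChain A p q c₁ → IsSaturatedPrimeChain A p q c₂ →
      c₁.length = c₂.length

/-- A ring is universally catenary if every finitely generated algebra over it
(equivalently, every quotient of a polynomial ring in finitely many variables over it)
is catenary. -/
def IsUniversallyCatenary (A : Type*) [CommRing A] : Prop :=
  ∀ (n : ℕ) (I : Ideal (MvPolynomial (Fin n) A)), IsCatenaryRing (MvPolynomial (Fin n) A ⧸ I)

/-- A system of parameters of a local ring `A`: a list of `dim A` elements generating an
ideal primary to the maximal ideal. -/
def IsSystemOfParameters (A : Type*) [CommRing A] [IsLocalRing A] (rs : List A) : Prop :=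
  (Ideal.span {r | r ∈ rs}).radical = maximalIdeal A ∧
    (rs.length : WithBot ℕ∞) = ringKrullDim A

/-- A balanced big Cohen–Macaulay module: `𝔪E ≠ E` and every system of parameters of `A`
is a regular sequence on `E`. -/
def IsBalancedBigCohenMacaulayModule (A E : Type*) [CommRing A] [IsLocalRing A]
    [AddCommGroup E] [Module A E] : Prop :=
  (maximalIdeal A) • (⊤ : Submodule A E) ≠ ⊤ ∧
    ∀ rs : List A, IsSystemOfParameters A rs → RingTheory.Sequence.IsRegular (R := A) E rs


section
section GradeSection
open CategoryTheory RingTheory.Sequence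
open scoped Pointwise
universe u v

lemma ext_vanish {A : Type u} [CommRing A] (N : ModuleCat.{max u v} A) (I : Ideal A)
    (hN : ∀ a ∈ I, a • 𝟙 N = 0) (rs : List A) :
    ∀ (M : ModuleCat.{max u v} A), (∀ a ∈ rs, a ∈ I) → IsWeaklyRegular M rs →
    ∀ j, j < rs.length → ∀ e : Abelian.Ext N M j, e = 0 := by
  induction rs with
  | nil => intro M _ _ j hj; simp at hj
  | cons a rs ih =>
    intro M hI hreg j hj e
    rw [isWeaklyRegular_cons_iff] at hreg
    have hS := IsSMulRegular.smulShortComplex_shortExact (M := M) hreg.1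
    have hz : e.comp (Abelian.Ext.mk₀ (M.smulShortComplex a).f) (add_zero j) = 0 := by
      have h1 : a • e = 0 := by
        have : a • e = (Abelian.Ext.mk₀ (a • 𝟙 N)).comp e (zero_add j) := by
          rw [Abelian.Ext.mk₀_smul]; simp
        rw [this, hN a (hI a (by simp))]; simp
      have h2 : e.comp (Abelian.Ext.mk₀ (a • 𝟙 M)) (add_zero j) = 0 := by
        rw [Abelian.Ext.mk₀_smul]; simpa using h1
      exact h2
    cases j with
    | zero => 
      have := hS.mono_f
      have hinj := Abelian.Ext.postcomp_mk₀_injective_of_mono N (M.smulShortComplex a).f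
      exact (injective_iff_map_eq_zero _).1 hinj e hz
    | succ j =>
      obtain ⟨x3, hx3⟩ := Abelian.Ext.covariant_sequence_exact₁ N hS e hz rfl
      have := ih (M.smulShortComplex a).X₃ (fun b hb => hI b (by simp [hb])) hreg.2 j (by simpa using hj) x3
      rw [← hx3, this, Abelian.Ext.zero_comp]; rfl

lemma mem_ofList_cons_smul_iff {A M : Type*} [CommRing A] [AddCommGroup M] [Module A M]
    (b : A) (bs : List A) (z : M) :
    z ∈ (Ideal.ofList (b :: bs) • ⊤ : Submodule A M) ↔
      (Submodule.Quotient.mk z : QuotSMulTop b M) ∈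
        (Ideal.ofList bs • ⊤ : Submodule A (QuotSMulTop b M)) := by
  have h : (Ideal.ofList bs • ⊤ : Submodule A (QuotSMulTop b M)) =
      (Ideal.ofList bs • ⊤ : Submodule A M).map (Submodule.mkQ (b • (⊤ : Submodule A M))) := by
    rw [Submodule.map_smul'', Submodule.map_top, Submodule.range_mkQ]
  rw [h, ← Submodule.mkQ_apply, ← Submodule.mem_comap, Submodule.comap_map_mkQ,
    Ideal.ofList_cons, Submodule.sup_smul, Submodule.ideal_span_singleton_smul]

lemma socle_zero_aux {A : Type u} [CommRing A] (I : Ideal A) (bs : List A) :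
    ∀ (M : ModuleCat.{max u v} A), IsWeaklyRegular M bs →
     (∀ j, j ≤ bs.length → ∀ e : Abelian.Ext (ModuleCat.of A (ULift.{max u v} (A ⧸ I))) M j, e = 0) →
    ∀ z : M, (∀ a ∈ I, a • z ∈ (Ideal.ofList bs • ⊤ : Submodule A M)) →
      z ∈ (Ideal.ofList bs • ⊤ : Submodule A M) := by
  induction bs with
  | nil =>
    intro M _ h z hz
    simp only [Ideal.ofList_nil, Submodule.bot_smul, Submodule.mem_bot] at hz ⊢
    let g : (A ⧸ I) →ₗ[A] M := Submodule.liftQ I (LinearMap.toSpanSingleton A M z)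
      (fun a ha => by
        rw [LinearMap.mem_ker, LinearMap.toSpanSingleton_apply]; exact hz a ha)
    let f : ModuleCat.of A (ULift.{max u v} (A ⧸ I)) ⟶ M :=
      ModuleCat.ofHom (g ∘ₗ (ULift.moduleEquiv (R := A)).toLinearMap)
    have h0 := h 0 (by simp) (Abelian.Ext.mk₀ f)
    have hf : f = 0 := by
      apply (Abelian.Ext.mk₀_bijective _ _).1
      rw [h0, Abelian.Ext.mk₀_zero]
    have : f.hom (ULift.up (Ideal.Quotient.mk I 1)) = z := by
      change g (Submodule.Quotient.mk 1) = z
      rw [Submodule.liftQ_apply]; simp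
    rw [← this, hf]; simp
  | cons b bs ih =>
    intro M hreg h z hz
    rw [isWeaklyRegular_cons_iff] at hreg
    have hS := IsSMulRegular.smulShortComplex_shortExact (M := M) hreg.1
    rw [mem_ofList_cons_smul_iff]
    refine ih (M.smulShortComplex b).X₃ hreg.2 ?_ (Submodule.Quotient.mk z) ?_
    · intro j hj e
      obtain ⟨x2, hx2⟩ := Abelian.Ext.covariant_sequence_exact₃ _ hS e rfl
        (h (j+1) (by simpa using hj) _)
      have hx : x2 = 0 := h j (by simp; omega) x2
      rw [← hx2, hx, Abelian.Ext.zero_comp]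
    · intro a ha
      exact (mem_ofList_cons_smul_iff _ _ _).1 (hz a ha)

/-- Grade comparison: if `I` contains a weakly `M`-regular sequence longer than the weakly
`M`-regular sequence `bs`, then `M / bs M` has no nonzero element killed by `I`. -/
lemma socle_zero {A : Type u} [CommRing A] (I : Ideal A) (M : Type v) [AddCommGroup M] [Module A M]
    (as bs : List A) (has : ∀ a ∈ as, a ∈ I)
    (hra : IsWeaklyRegular M as) (hrb : IsWeaklyRegular M bs) (hlen : bs.length < as.length)
    (z : M) (hz : ∀ a ∈ I, a • z ∈ (Ideal.ofList bs • ⊤ : Submodule A M)) :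
    z ∈ (Ideal.ofList bs • ⊤ : Submodule A M) := by
  let M' := ModuleCat.of A (ULift.{u} M)
  let e : M ≃ₗ[A] M' := ULift.moduleEquiv.symm
  have hmap : (Ideal.ofList bs • ⊤ : Submodule A M').comap e.toLinearMap =
      (Ideal.ofList bs • ⊤ : Submodule A M) := by
    have := Submodule.map_smul'' (Ideal.ofList bs) (⊤ : Submodule A M) e.toLinearMap
    rw [Submodule.map_top, LinearEquiv.range] at this
    rw [← this, Submodule.comap_map_eq_of_injective e.injective]
  have key := socle_zero_aux.{u, v} I bs M' ((e.isWeaklyRegular_congr bs).1 hrb) ?_ (e z) ?_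
  · rw [← hmap]; exact key
  · intro j hj
    refine ext_vanish.{u, v} _ I ?_ as M' has ((e.isWeaklyRegular_congr as).1 hra) j (by omega)
    intro a ha
    ext x
    obtain ⟨x⟩ := x
    obtain ⟨x, rfl⟩ := Ideal.Quotient.mk_surjective x
    have : a • Ideal.Quotient.mk I x = 0 := by
      rw [Algebra.smul_def, Ideal.Quotient.algebraMap_eq, ← map_mul, Ideal.Quotient.eq_zero_iff_mem]
      exact I.mul_mem_right _ ha
    exact this
  · intro a ha
    have h1 := hz a ha
    rw [← hmap] at h1
    exact h1

end GradeSection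
end

section
section PolySection
open RingTheory.Sequence TensorProduct Polynomial

lemma poly_smul_regular {A N : Type*} [CommRing A] [AddCommGroup N] [Module A N] (f : A[X])
    (h : IsSMulRegular N f.leadingCoeff) : IsSMulRegular (A[X] ⊗[A] N) f := by
  rw [LinearEquiv.isSMulRegular_congr
    (PolynomialModule.polynomialTensorProductLEquivPolynomialModule A N)]
  rw [isSMulRegular_iff_right_eq_zero_of_smul]
  intro g hg
  by_contra hne
  have hs : g.coeff.support.Nonempty := by
    rw [Finsupp.support_nonempty_iff]
    intro h0
    apply hne
    apply (PolynomialModule.coeffEquiv A).injective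
    exact h0
  set d := g.coeff.support.max' hs with hd
  have hd1 : g.coeff d ≠ 0 := by
    rw [← Finsupp.mem_support_iff]; exact Finset.max'_mem _ _
  have hd2 : ∀ j, d < j → g.coeff j = 0 := by
    intro j hj
    by_contra hc
    exact absurd (Finset.le_max' _ j (Finsupp.mem_support_iff.2 hc)) (by omega)
  have h1 := PolynomialModule.smul_apply f g (f.natDegree + d)
  rw [hg, Finset.sum_eq_single (f.natDegree, d)] at h1
  · apply hd1
    refine (isSMulRegular_iff_right_eq_zero_of_smul).1 h _ ?_
    exact h1.symm
  · rintro ⟨i, j⟩ hij hne'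
    rw [Finset.HasAntidiagonal.mem_antidiagonal] at hij
    simp only at hij ⊢
    rcases lt_trichotomy j d with hj | hj | hj
    · rw [Polynomial.coeff_eq_zero_of_natDegree_lt (by omega), zero_smul]
    · exfalso; apply hne'; ext <;> simp <;> omega
    · rw [hd2 j hj, smul_zero]
  · intro hc; simp at hc

lemma poly_weaklyRegular {A : Type*} [CommRing A] (f : A[X]) (rs : List A) :
    ∀ (M : Type _) [AddCommGroup M] [Module A M] (v : M →ₗ[A] M)
      (_ : ∀ x, v (f.leadingCoeff • x) = x), IsWeaklyRegular M rs →
      IsWeaklyRegular (A[X] ⊗[A] M) (rs.map (algebraMap A A[X]) ++ [f]) := by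
  induction rs with
  | nil =>
    intro M _ _ v hv _
    rw [List.map_nil, List.nil_append, isWeaklyRegular_singleton_iff]
    apply poly_smul_regular
    intro x y hxy
    have := congrArg v hxy
    simpa [hv] using this
  | cons a rs ih =>
    intro M _ _ v hv h
    rw [isWeaklyRegular_cons_iff] at h
    rw [List.map_cons, List.cons_append, isWeaklyRegular_cons_iff]
    refine ⟨h.1.of_flat_of_isBaseChange (TensorProduct.isBaseChange A M A[X]), ?_⟩
    rw [(QuotSMulTop.algebraMapTensorEquivTensorQuotSMulTop a M A[X]).isWeaklyRegular_congr]
    refine ih (QuotSMulTop a M) (QuotSMulTop.map a v) ?_ h.2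
    intro x
    obtain ⟨x, rfl⟩ := Submodule.Quotient.mk_surjective _ x
    rw [← Submodule.Quotient.mk_smul, QuotSMulTop.map_apply_mk, hv]

/-- The canonical map `A_p ⊗ E → C ⊗ E` is a base change along `A → C`. -/
lemma exists_baseChange_loc {R A C E : Type*} [CommRing R] [CommRing A] [CommRing C]
    [AddCommGroup E] [Module R E] [Algebra R A] [Algebra R C] [Algebra A C] [IsScalarTower R A C]
    (p : Ideal A) [p.IsPrime] [Algebra (Localization.AtPrime p) C]
    [IsScalarTower A (Localization.AtPrime p) C] :
    ∃ g : (Localization.AtPrime p ⊗[R] E) →ₗ[A] C ⊗[R] E, IsBaseChange C g := by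
  have : IsScalarTower R (Localization.AtPrime p) C := by
    refine IsScalarTower.of_algebraMap_eq fun x => ?_
    rw [IsScalarTower.algebraMap_apply R A C, IsScalarTower.algebraMap_apply R A (Localization.AtPrime p),
      ← IsScalarTower.algebraMap_apply A (Localization.AtPrime p) C]
  let Ap := Localization.AtPrime p
  let g : (Ap ⊗[R] E) →ₗ[Ap] C ⊗[R] E :=
    TensorProduct.AlgebraTensorModule.map (Algebra.linearMap Ap C) LinearMap.id
  have hg : IsBaseChange C g := by
    refine IsBaseChange.of_comp (TensorProduct.isBaseChange R E Ap) ?_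
    convert TensorProduct.isBaseChange R E C
    ext x
    simp [g]
  have hid : IsBaseChange Ap (LinearMap.id : (Ap ⊗[R] E) →ₗ[A] (Ap ⊗[R] E)) := by
    have : IsLocalizedModule p.primeCompl (LinearMap.id : (Ap ⊗[R] E) →ₗ[A] (Ap ⊗[R] E)) := 
      isLocalizedModule_id p.primeCompl (Ap ⊗[R] E) Ap
    exact IsLocalizedModule.isBaseChange p.primeCompl Ap _
  exact ⟨_, hid.comp hg⟩

end PolySection
end

section
section DepthSection
open RingTheory.Sequence TensorProduct Polynomial

lemma flat_transfer {R A C E : Type*} [CommRing R] [CommRing A] [CommRing C]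
    [AddCommGroup E] [Module R E] [Algebra R A] [Algebra R C] [Algebra A C] [IsScalarTower R A C]
    (p : Ideal A) [p.IsPrime] [Algebra (Localization.AtPrime p) C]
    [IsScalarTower A (Localization.AtPrime p) C] [Module.Flat A C] (rs : List A)
    (h : IsWeaklyRegular (Localization.AtPrime p ⊗[R] E) rs) :
    IsWeaklyRegular (C ⊗[R] E) (rs.map (algebraMap A C)) := by
  obtain ⟨g, hg⟩ := exists_baseChange_loc (R := R) (C := C) (E := E) p
  exact h.of_flat_of_isBaseChange hg

/-- Localizations of the base change of `E` have depth at least the height. -/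
def HasLocDepth (R A E : Type*) [CommRing R] [CommRing A] [Algebra R A]
    [AddCommGroup E] [Module R E] : Prop :=
  ∀ (P : Ideal A) [P.IsPrime], ∃ rs : List A, (∀ a ∈ rs, a ∈ P) ∧ P.height ≤ rs.length ∧
    IsWeaklyRegular (Localization.AtPrime P ⊗[R] E) rs

/-- The algebra structure of localizations for a prime lying over. -/
noncomputable abbrev locAlg {A C : Type*} [CommRing A] [CommRing C] [Algebra A C] (p : Ideal A) (P : Ideal C)
    [p.IsPrime] [P.IsPrime] (h : P.comap (algebraMap A C) ≤ p) :
    Algebra (Localization.AtPrime p) (Localization.AtPrime P) :=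
  RingHom.toAlgebra (IsLocalization.lift (M := p.primeCompl) (g := algebraMap A (Localization.AtPrime P))
    (fun y => by
      rw [IsScalarTower.algebraMap_apply A C]
      refine IsLocalization.map_units _ (⟨algebraMap A C y, fun hy => y.2 (h hy)⟩ : P.primeCompl)))

lemma locAlg_tower {A C : Type*} [CommRing A] [CommRing C] [Algebra A C] (p : Ideal A) (P : Ideal C)
    [p.IsPrime] [P.IsPrime] (h : P.comap (algebraMap A C) ≤ p) :
    letI := locAlg p P h
    IsScalarTower A (Localization.AtPrime p) (Localization.AtPrime P) := by
  letI := locAlg p P h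
  refine IsScalarTower.of_algebraMap_eq fun x => ?_
  exact (IsLocalization.lift_eq _ x).symm

attribute [local instance] Polynomial.algebra Polynomial.isLocalization in
lemma height_le_poly {A : Type*} [CommRing A] [IsNoetherianRing A] (P : Ideal A[X]) [P.IsPrime] :
    P.height ≤ (P.comap (C : A →+* A[X])).height + 1 := by
  set p := P.comap (C : A →+* A[X]) with hp
  let Ap := Localization.AtPrime p
  have hd : Disjoint ((p.primeCompl.map (C : A →+* A[X]) : Submonoid A[X]) : Set A[X]) (P : Set A[X]) := by
    rw [Set.disjoint_left]
    rintro _ ⟨x, hx, rfl⟩ hP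
    exact hx hP
  have h1 := IsLocalization.height_map_of_disjoint (S := Ap[X]) (p.primeCompl.map (C : A →+* A[X])) P hd
  have hpr : (P.map (algebraMap A[X] Ap[X])).IsPrime := IsLocalization.isPrime_of_isPrime_disjoint (p.primeCompl.map (C : A →+* A[X])) _ P inferInstance hd
  have h2 := Ideal.height_le_ringKrullDim_of_ne_top hpr.ne_top
  rw [Polynomial.ringKrullDim_of_isNoetherianRing, h1, IsLocalization.AtPrime.ringKrullDim_eq_height p Ap] at h2
  exact_mod_cast h2

lemma height_map_C_le {A : Type*} [CommRing A] [IsNoetherianRing A] (p : Ideal A) [p.IsPrime] :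
    (p.map (C : A →+* A[X])).height ≤ p.height := by
  have hp1 : (p.map (C : A →+* A[X])).IsPrime := Ideal.isPrime_map_C_of_isPrime
  let Q := p.comap (Polynomial.evalRingHom (0 : A))
  have hQ : Q.comap (C : A →+* A[X]) = p := by
    ext x; simp [Q]
  have hlt : p.map (C : A →+* A[X]) < Q := by
    refine lt_of_le_of_ne ?_ ?_
    · rw [Ideal.map_le_iff_le_comap, hQ]
    · intro h
      have : (X : A[X]) ∈ p.map (C : A →+* A[X]) := by rw [h]; simp [Q]
      rw [Ideal.mem_map_C_iff] at this
      have h1 := this 1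
      rw [coeff_X_one] at h1
      exact (Ideal.ne_top_iff_one _).1 (Ideal.IsPrime.ne_top ‹p.IsPrime›) h1
  have h1 := height_le_poly Q
  rw [hQ] at h1
  have h2 := (Ideal.height_add_one_le_of_lt_of_isPrime hlt).trans h1
  exact (ENat.add_le_add_iff_right (by simp)).1 h2

lemma exists_leadingCoeff {A : Type*} [CommRing A] (P : Ideal A[X])
    (h : ¬ P ≤ (P.comap (C : A →+* A[X])).map C) :
    ∃ f ∈ P, f.leadingCoeff ∉ P.comap (C : A →+* A[X]) := by
  by_contra! hc
  apply h
  have : ∀ n : ℕ, ∀ f ∈ P, f.natDegree < n → f ∈ (P.comap (C : A →+* A[X])).map C := by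
    intro n
    induction n with
    | zero => intro f _ hn; omega
    | succ n ih =>
      intro f hf hn
      have h1 : C f.leadingCoeff ∈ (P.comap (C : A →+* A[X])).map C :=
        Ideal.mem_map_of_mem _ (hc f hf)
      have h1P : C f.leadingCoeff ∈ P := hc f hf
      by_cases hd : f.natDegree = 0
      · rw [Polynomial.eq_C_of_natDegree_eq_zero hd] at hf ⊢
        exact Ideal.mem_map_of_mem _ hf
      · have h2 : f.eraseLead ∈ (P.comap (C : A →+* A[X])).map C := by
          apply ih
          · rw [← Polynomial.self_sub_C_mul_X_pow]
            exact P.sub_mem hf (P.mul_mem_right _ h1P)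
          · have := Polynomial.eraseLead_natDegree_le f
            omega
        rw [← Polynomial.eraseLead_add_C_mul_X_pow f]
        exact Ideal.add_mem _ h2 (Ideal.mul_mem_right _ _ h1)
  intro f hf
  exact this _ f hf (Nat.lt_succ_self _)

lemma poly_transfer {A D M N : Type*} [CommRing A] [CommRing D] [Algebra A D] [Algebra A[X] D]
    [IsScalarTower A A[X] D] [AddCommGroup M] [Module A M] [AddCommGroup N] [Module A N]
    [Module A[X] N] [Module D N] [IsScalarTower A D N] [IsScalarTower A A[X] N]
    [IsScalarTower A[X] D N] [Module.Flat A[X] D] (g : M →ₗ[A] N) (hg : IsBaseChange D g)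
    (rs : List A[X]) (h1 : IsWeaklyRegular (A[X] ⊗[A] M) rs) : IsWeaklyRegular N rs := by
  have h0 := TensorProduct.isBaseChange A M A[X]
  let g' : A[X] ⊗[A] M →ₗ[A[X]] N := h0.lift g
  have hg' : IsBaseChange D g' := by
    refine IsBaseChange.of_comp h0 ?_
    have : (g'.restrictScalars A) ∘ₗ (TensorProduct.mk A A[X] M 1) = g :=
      LinearMap.ext fun x => h0.lift_eq g x
    rw [this]
    exact hg
  have h2 := h1.of_flat_of_isBaseChange hg'
  rwa [isWeaklyRegular_map_algebraMap_iff] at h2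

lemma poly_extend {R A E D : Type*} [CommRing R] [CommRing A] [Algebra R A] [CommRing D]
    [AddCommGroup E] [Module R E] [Algebra A[X] D] [Algebra A D] [Algebra R D]
    [IsScalarTower A A[X] D] [IsScalarTower R A D] [IsScalarTower R A[X] D]
    [Module.Flat A[X] D] (p : Ideal A) [p.IsPrime] [Algebra (Localization.AtPrime p) D]
    [IsScalarTower A (Localization.AtPrime p) D] (xs : List A)
    (hreg : IsWeaklyRegular (Localization.AtPrime p ⊗[R] E) xs) (f : A[X])
    (hfl : f.leadingCoeff ∉ p) :
    IsWeaklyRegular (D ⊗[R] E) (xs.map (algebraMap A A[X]) ++ [f]) := by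
  obtain ⟨g, hg⟩ := exists_baseChange_loc (R := R) (C := D) (E := E) p
  let M0 := Localization.AtPrime p ⊗[R] E
  let u : Localization.AtPrime p := IsLocalization.mk' _ 1 (⟨f.leadingCoeff, hfl⟩ : p.primeCompl)
  let v : M0 →ₗ[A] M0 := (LinearMap.lsmul (Localization.AtPrime p) M0 u).restrictScalars A
  have hv : ∀ x, v (f.leadingCoeff • x) = x := by
    intro x
    change u • (f.leadingCoeff • x) = x
    rw [← algebraMap_smul (Localization.AtPrime p) f.leadingCoeff x, smul_smul]
    have : u * algebraMap A (Localization.AtPrime p) f.leadingCoeff = 1 := by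
      have := IsLocalization.mk'_spec (Localization.AtPrime p) (1 : A) (⟨f.leadingCoeff, hfl⟩ : p.primeCompl)
      simpa using this
    rw [this, one_smul]
  have h1 := poly_weaklyRegular f xs M0 v hv hreg
  exact poly_transfer g hg _ h1

lemma HasLocDepth.polynomial {R A E : Type*} [CommRing R] [CommRing A] [Algebra R A]
    [AddCommGroup E] [Module R E] [IsNoetherianRing A] (h : HasLocDepth R A E) :
    HasLocDepth R A[X] E := by
  intro P hP
  set p := P.comap (C : A →+* A[X]) with hp
  obtain ⟨xs, hxs, hlen, hreg⟩ := h p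
  letI alg := locAlg p P (le_of_eq rfl)
  haveI tow := locAlg_tower p P (le_of_eq rfl)
  haveI : IsScalarTower R A (Localization.AtPrime P) := by
    refine IsScalarTower.of_algebraMap_eq fun x => ?_
    rw [IsScalarTower.algebraMap_apply R A[X] (Localization.AtPrime P),
      IsScalarTower.algebraMap_apply R A A[X], ← IsScalarTower.algebraMap_apply A A[X] (Localization.AtPrime P)]
  have hfl : Module.Flat A[X] (Localization.AtPrime P) := IsLocalization.flat _ P.primeCompl
  by_cases hc : P ≤ p.map C
  · have hfl2 : Module.Flat A (Localization.AtPrime P) := Module.Flat.trans A A[X] _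
    have hPe : P = p.map C := le_antisymm hc (Ideal.map_le_iff_le_comap.2 le_rfl)
    refine ⟨xs.map (algebraMap A A[X]), ?_, ?_, ?_⟩
    · intro a ha
      obtain ⟨x, hx, rfl⟩ := List.mem_map.1 ha
      exact hxs x hx
    · rw [List.length_map]
      calc P.height = (p.map C).height := by rw [← hPe]
        _ ≤ p.height := height_map_C_le p
        _ ≤ _ := hlen
    · have := flat_transfer (C := Localization.AtPrime P) p xs hreg
      rw [isWeaklyRegular_map_algebraMap_iff] at this ⊢
      exact this
  · obtain ⟨f, hf, hfl⟩ := exists_leadingCoeff P hc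
    refine ⟨xs.map (algebraMap A A[X]) ++ [f], ?_, ?_, ?_⟩
    · intro a ha
      rcases List.mem_append.1 ha with ha | ha
      · obtain ⟨x, hx, rfl⟩ := List.mem_map.1 ha
        exact hxs x hx
      · rw [List.mem_singleton] at ha
        exact ha ▸ hf
    · rw [List.length_append, List.length_map]
      refine (height_le_poly P).trans ?_
      push_cast
      simpa using hlen
    · exact poly_extend p xs hreg f hfl

end DepthSection
end

section
section MvSection
open RingTheory.Sequence TensorProduct

lemma HasLocDepth.of_equiv {R A A' E : Type*} [CommRing R] [CommRing A] [Algebra R A]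
    [CommRing A'] [Algebra R A'] [AddCommGroup E] [Module R E] (e : A ≃ₐ[R] A')
    (h : HasLocDepth R A E) : HasLocDepth R A' E := by
  intro P hP
  let _ : Algebra A A' := e.toRingEquiv.toRingHom.toAlgebra
  have : IsScalarTower R A A' := IsScalarTower.of_algebraMap_eq fun x => (e.commutes x).symm
  have hfl0 : Module.Flat A A' := Module.Flat.of_linearEquiv
    ({ e.toRingEquiv with map_smul' := fun a x => e.map_mul a x } : A ≃ₗ[A] A').symm
  let p := P.comap (algebraMap A A')
  obtain ⟨xs, hxs, hlen, hreg⟩ := h p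
  let alg := locAlg p P (le_of_eq rfl)
  have tow := locAlg_tower p P (le_of_eq rfl)
  have : IsScalarTower R A (Localization.AtPrime P) := by
    refine IsScalarTower.of_algebraMap_eq fun x => ?_
    rw [IsScalarTower.algebraMap_apply R A' (Localization.AtPrime P),
      IsScalarTower.algebraMap_apply R A A', ← IsScalarTower.algebraMap_apply A A' (Localization.AtPrime P)]
  have hfl : Module.Flat A' (Localization.AtPrime P) := IsLocalization.flat _ P.primeCompl
  have hfl2 : Module.Flat A (Localization.AtPrime P) := Module.Flat.trans A A' _
  refine ⟨xs.map (algebraMap A A'), ?_, ?_, ?_⟩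
  · intro a ha
    obtain ⟨x, hx, rfl⟩ := List.mem_map.1 ha
    exact hxs x hx
  · rw [List.length_map]
    refine le_trans (le_of_eq ?_) hlen
    exact (RingEquiv.height_comap e.toRingEquiv P).symm
  · have := flat_transfer (C := Localization.AtPrime P) p xs hreg
    rw [isWeaklyRegular_map_algebraMap_iff] at this ⊢
    exact this

lemma HasLocDepth.mvPolynomial {R E : Type*} [CommRing R]
    [AddCommGroup E] [Module R E] [IsNoetherianRing R] (h : HasLocDepth R R E) (n : ℕ) :
    HasLocDepth R (MvPolynomial (Fin n) R) E := by
  induction n with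
  | zero => exact h.of_equiv (MvPolynomial.isEmptyAlgEquiv R (Fin 0)).symm
  | succ n ih => exact ih.polynomial.of_equiv (MvPolynomial.finSuccEquiv R n).symm

end MvSection
end

section
section KeySection
open RingTheory.Sequence TensorProduct

lemma loc_mem_smul {S M N : Type*} [CommRing S] [AddCommGroup M] [Module S M] [AddCommGroup N]
    [Module S N] (T : Submonoid S) (g : M →ₗ[S] N) [IsLocalizedModule T g] (I : Ideal S) (w : M)
    (h : g w ∈ (I • ⊤ : Submodule S N)) : ∃ s ∈ T, s • w ∈ (I • ⊤ : Submodule S M) := by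
  have key : ∀ n ∈ (I • ⊤ : Submodule S N), ∃ s ∈ T, ∃ m ∈ (I • ⊤ : Submodule S M), s • n = g m := by
    intro n hn
    refine Submodule.smul_induction_on hn ?_ ?_
    · intro r hr n _
      obtain ⟨⟨m, s⟩, hs⟩ := IsLocalizedModule.surj T g n
      refine ⟨s, s.2, r • m, Submodule.smul_mem_smul hr trivial, ?_⟩
      rw [map_smul, ← hs, smul_comm]
      rfl
    · rintro x y ⟨s, hs, m, hm, h1⟩ ⟨t, ht, m', hm', h2⟩
      refine ⟨s * t, T.mul_mem hs ht, t • m + s • m', Submodule.add_mem _ (Submodule.smul_mem _ _ hm)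
        (Submodule.smul_mem _ _ hm'), ?_⟩
      rw [map_add, map_smul, map_smul, ← h1, ← h2, smul_add, smul_smul, smul_smul, mul_comm t s]
  obtain ⟨s, hs, m, hm, h1⟩ := key _ h
  have h2 : g (s • w - m) = 0 := by rw [map_sub, map_smul, h1, sub_self]
  obtain ⟨t, ht⟩ := (IsLocalizedModule.eq_zero_iff T g).1 h2
  have ht' : (t : S) • (s • w - m) = 0 := ht
  refine ⟨t * s, T.mul_mem t.2 hs, ?_⟩
  rw [smul_sub, sub_eq_zero, smul_smul] at ht'
  rw [ht']
  exact Submodule.smul_mem _ _ hm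

lemma key_abs {S M N : Type*} [CommRing S] [AddCommGroup M] [Module S M] [AddCommGroup N]
    [Module S N] (Q : Ideal S) [Q.IsPrime] (g : M →ₗ[S] N) [IsLocalizedModule Q.primeCompl g]
    (as bs : List S) (has : ∀ a ∈ as, a ∈ Q) (hra : IsWeaklyRegular N as)
    (hrb : IsWeaklyRegular N bs) (hlen : bs.length < as.length) (w : M)
    (hw : ∀ a, a ∈ Q ↔ a • w ∈ (Ideal.ofList bs • ⊤ : Submodule S M)) : False := by
  have h1 : g w ∈ (Ideal.ofList bs • ⊤ : Submodule S N) := by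
    refine socle_zero Q N as bs has hra hrb hlen _ fun a ha => ?_
    rw [← map_smul]
    have := Submodule.mem_map_of_mem (f := g) ((hw a).1 ha)
    rw [Submodule.map_smul''] at this
    exact Submodule.smul_mono le_rfl le_top this
  obtain ⟨s, hs, h2⟩ := loc_mem_smul Q.primeCompl g _ w h1
  exact hs ((hw s).2 h2)

lemma key_claim {R S E : Type*} [CommRing R] [CommRing S] [Algebra R S] [IsNoetherianRing S]
    [AddCommGroup E] [Module R E] (h : HasLocDepth R S E) (q : Ideal S) [q.IsPrime]
    (cs : List S) (hc : ∀ i ≤ cs.length, ∀ Q : Ideal S, Q.IsPrime → Q ≤ q →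
      (∀ a ∈ cs.take i, a ∈ Q) → (i : ℕ∞) ≤ Q.height) :
    IsWeaklyRegular (Localization.AtPrime q ⊗[R] E) cs := by
  suffices hs : ∀ i ≤ cs.length, IsWeaklyRegular (Localization.AtPrime q ⊗[R] E) (cs.take i) by
    simpa using hs cs.length le_rfl
  intro i
  induction i with
  | zero => intro _; simp
  | succ i ih =>
    intro hi
    have hwi := ih (by omega)
    have hil : i < cs.length := by omega
    rw [List.take_add_one, List.getElem?_eq_getElem hil, Option.toList_some, isWeaklyRegular_append_iff]
    refine ⟨hwi, ?_⟩
    rw [isWeaklyRegular_singleton_iff]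
    set M := Localization.AtPrime q ⊗[R] E with hM
    set K : Submodule S M := Ideal.ofList (cs.take i) • ⊤ with hK
    rw [isSMulRegular_iff_right_eq_zero_of_smul]
    intro z hz
    by_contra hz0
    obtain ⟨Q, hQ, hle⟩ := exists_le_isAssociatedPrime_of_isNoetherianRing S z hz0
    have hQp : Q.IsPrime := hQ.isPrime
    obtain ⟨_, w, hw⟩ := isAssociatedPrime_iff.1 hQ
    obtain ⟨w, rfl⟩ := Submodule.Quotient.mk_surjective _ w
    have hw' : ∀ a, a ∈ Q ↔ a • w ∈ K := by
      intro a
      rw [hw, Submodule.mem_colon_singleton, Submodule.mem_bot, ← Submodule.Quotient.mk_smul,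
        Submodule.Quotient.mk_eq_zero]
    have hQq : Q ≤ q := by
      intro a ha
      by_contra haq
      have h1 := (hw' a).1 ha
      apply hQp.ne_top
      rw [Ideal.eq_top_iff_one, hw', one_smul]
      have : w = (LinearMap.restrictScalars S (LinearMap.lsmul (Localization.AtPrime q) M
          (IsLocalization.mk' _ (1 : S) (⟨a, haq⟩ : q.primeCompl)))) (a • w) := by
        change w = (IsLocalization.mk' (Localization.AtPrime q) (1 : S) (⟨a, haq⟩ : q.primeCompl)) • (a • w)
        rw [← algebraMap_smul (Localization.AtPrime q) a w, smul_smul]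
        have := IsLocalization.mk'_spec (Localization.AtPrime q) (1 : S) (⟨a, haq⟩ : q.primeCompl)
        simp only [map_one] at this
        rw [this, one_smul]
      rw [this]
      have h2 := Submodule.mem_map_of_mem (f := (LinearMap.restrictScalars S (LinearMap.lsmul (Localization.AtPrime q) M
          (IsLocalization.mk' _ (1 : S) (⟨a, haq⟩ : q.primeCompl))))) h1
      rw [hK, Submodule.map_smul''] at h2
      exact Submodule.smul_mono le_rfl le_top h2
    have hcQ : ∀ a ∈ cs.take i, a ∈ Q := by
      intro a ha
      rw [hw']
      exact Submodule.smul_mem_smul (Ideal.subset_span ha) trivial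
    have hciQ : cs[i] ∈ Q := by
      apply hle
      rw [Submodule.mem_colon_singleton, Submodule.mem_bot]
      exact hz
    have hht := hc (i + 1) hi Q hQp hQq (by
      intro a ha
      rw [List.take_add_one, List.getElem?_eq_getElem hil, Option.toList_some, List.mem_append,
        List.mem_singleton] at ha
      rcases ha with ha | ha
      · exact hcQ a ha
      · exact ha ▸ hciQ)
    obtain ⟨as, has, hlen, hra⟩ := h Q
    have hqQ : Q.comap (algebraMap S S) ≤ q := hQq
    let alg := locAlg q Q hqQ
    have tow := locAlg_tower q Q hqQ
    obtain ⟨g, hg⟩ := exists_baseChange_loc (R := R) (C := Localization.AtPrime Q) (E := E) q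
    have hfl : Module.Flat S (Localization.AtPrime Q) := IsLocalization.flat _ Q.primeCompl
    have hrb := hwi.of_flat_of_isBaseChange hg
    rw [isWeaklyRegular_map_algebraMap_iff] at hrb
    have hloc : IsLocalizedModule Q.primeCompl g :=
      (isLocalizedModule_iff_isBaseChange Q.primeCompl (Localization.AtPrime Q) g).2 hg
    refine key_abs Q g as (cs.take i) has hra hrb ?_ w hw'
    have : ((i + 1 : ℕ) : ℕ∞) ≤ as.length := hht.trans hlen
    have := Nat.cast_le.1 this
    rw [List.length_take]
    omega

end KeySection
end

section
section BaseSection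
open RingTheory.Sequence TensorProduct

lemma height_quot_add {R : Type*} [CommRing R] [IsNoetherianRing R] (J : Ideal R)
    (P : Ideal (R ⧸ J)) [P.IsPrime] :
    J.height + P.height ≤ (P.comap (Ideal.Quotient.mk J)).height := by
  obtain ⟨l, hl, hlen⟩ := Ideal.exists_ltSeries_length_eq_height P
  have key : ∀ i (hi : i < l.length + 1), J.height + (i : ℕ) ≤ ((l ⟨i, hi⟩).asIdeal.comap (Ideal.Quotient.mk J)).height := by
    intro i
    induction i with
    | zero =>
      intro hi
      simp only [Nat.cast_zero, add_zero]
      apply Ideal.height_mono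
      intro x hx
      rw [Ideal.mem_comap, Ideal.Quotient.eq_zero_iff_mem.2 hx]
      exact Ideal.zero_mem _
    | succ i ih =>
      intro hi
      have h1 := ih (by omega)
      have h2 : l ⟨i, by omega⟩ < l ⟨i + 1, hi⟩ := l.strictMono (by simp [Fin.lt_def])
      have h3 : (l ⟨i, by omega⟩).asIdeal.comap (Ideal.Quotient.mk J) <
          (l ⟨i + 1, hi⟩).asIdeal.comap (Ideal.Quotient.mk J) := by
        exact (Ideal.orderEmbeddingOfSurjective _ Ideal.Quotient.mk_surjective).strictMono h2
      refine le_trans ?_ (Ideal.height_add_one_le_of_lt_of_isPrime h3)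
      push_cast
      rw [← add_assoc]
      gcongr
  have := key l.length (by omega)
  rw [← hlen]
  have h4 : l ⟨l.length, by omega⟩ = ⟨P, inferInstance⟩ := hl
  rw [h4] at this
  exact this

lemma exists_sop_extend {R : Type*} [CommRing R] [IsLocalRing R] [IsNoetherianRing R]
    (p : Ideal R) [p.IsPrime] : ∃ xs ys : List R, (∀ a ∈ xs, a ∈ p) ∧ p.height = xs.length ∧
      IsSystemOfParameters R (xs ++ ys) := by
  obtain ⟨J, hJ, hJ1, hJ2⟩ := Ideal.exists_spanRank_eq_and_height_eq p (Ideal.IsPrime.ne_top ‹_›)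
  have hfg : J.FG := IsNoetherian.noetherian J
  have hfin : J.generators.Finite := Submodule.FG.finite_generators hfg
  let xs := hfin.toFinset.toList
  have hxm : ∀ a, a ∈ xs ↔ a ∈ J.generators := by simp [xs]
  have hxs : Ideal.span {a | a ∈ xs} = J := by
    rw [show {a | a ∈ xs} = J.generators from Set.ext hxm]
    exact J.span_generators
  have hxlen : p.height = xs.length := by
    have h1 : xs.length = J.spanFinrank := by
      rw [Finset.length_toList, ← Set.ncard_eq_toFinset_card (hs := hfin),
        Submodule.FG.generators_ncard hfg]
    rw [h1]
    rw [Submodule.fg_iff_spanRank_eq_spanFinrank.mpr hfg] at hJ1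
    have := congrArg Cardinal.toENat hJ1
    simpa using this.symm
  have hJne : J ≠ ⊤ := fun h => Ideal.IsPrime.ne_top ‹p.IsPrime› (top_le_iff.1 (h ▸ hJ))
  have : Nontrivial (R ⧸ J) := Ideal.Quotient.nontrivial_iff.2 hJne
  have : IsLocalRing (R ⧸ J) := IsLocalRing.of_surjective' _ Ideal.Quotient.mk_surjective
  obtain ⟨s, hs, hscard⟩ := Ideal.exists_finset_card_eq_height_of_isNoetherianRing (maximalIdeal (R ⧸ J))
  have hcm : (maximalIdeal (R ⧸ J)).comap (Ideal.Quotient.mk J) = maximalIdeal R := by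
    refine IsLocalRing.eq_maximalIdeal ?_
    exact Ideal.comap_isMaximal_of_surjective _ Ideal.Quotient.mk_surjective
  have hle := height_quot_add J (maximalIdeal (R ⧸ J))
  rw [hcm, hJ2, ← hscard, hxlen] at hle
  choose r hr using (Ideal.Quotient.mk_surjective (I := J))
  let ys := s.toList.map r
  have hyslen : ys.length = s.card := by simp [ys]
  have hrad : (Ideal.span {a | a ∈ xs ++ ys}).radical = maximalIdeal R := by
    have hle1 : Ideal.span {a | a ∈ xs ++ ys} ≤ maximalIdeal R := by
      rw [Ideal.span_le]
      intro a ha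
      rcases List.mem_append.1 ha with ha | ha
      · refine IsLocalRing.le_maximalIdeal hJne ?_
        rw [← hxs]; exact Ideal.subset_span ha
      · obtain ⟨b, hb, rfl⟩ := List.mem_map.1 ha
        rw [← hcm]
        change Ideal.Quotient.mk J (r b) ∈ maximalIdeal (R ⧸ J)
        rw [hr]
        exact hs.1.2 (Ideal.subset_span (by simpa using hb))
    refine le_antisymm ((Ideal.IsPrime.radical_le_iff inferInstance).2 hle1) ?_
    rw [Ideal.radical_eq_sInf]
    refine le_sInf ?_
    rintro Q ⟨hQ, hQp⟩
    have hJQ : J ≤ Q := by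
      rw [← hxs]
      refine (Ideal.span_mono ?_).trans hQ
      intro a ha
      exact List.mem_append_left _ ha
    have hQ' : (Q.map (Ideal.Quotient.mk J)).IsPrime := by
      refine Ideal.map_isPrime_of_surjective Ideal.Quotient.mk_surjective ?_
      simpa using hJQ
    have : maximalIdeal (R ⧸ J) ≤ Q.map (Ideal.Quotient.mk J) := by
      refine hs.2 ⟨hQ', ?_⟩ (IsLocalRing.le_maximalIdeal hQ'.ne_top)
      rw [Ideal.span_le]
      intro b hb
      rw [← hr b]
      refine Ideal.mem_map_of_mem _ (hQ (Ideal.subset_span (List.mem_append_right _ ?_)))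
      exact List.mem_map.2 ⟨b, by simpa using hb, rfl⟩
    rw [← hcm]
    refine (Ideal.comap_mono this).trans ?_
    rw [Ideal.comap_map_of_surjective _ Ideal.Quotient.mk_surjective]
    refine sup_le le_rfl ?_
    rw [← RingHom.ker_eq_comap_bot, Ideal.mk_ker]
    exact hJQ
  refine ⟨xs, ys, ?_, hxlen, hrad, ?_⟩
  · intro a ha
    apply hJ; rw [← hxs]; exact Ideal.subset_span ha
  · rw [← IsLocalRing.maximalIdeal_height_eq_ringKrullDim]
    have h1 : (maximalIdeal R).height ≤ (xs ++ ys).length := by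
      classical
      have : (maximalIdeal R) ∈ (Ideal.span (((xs ++ ys).toFinset : Finset R) : Set R)).minimalPrimes := by
        rw [List.coe_toFinset, ← Ideal.radical_minimalPrimes, hrad, Ideal.minimalPrimes_eq_subsingleton_self]
        rfl
      refine (Ideal.height_le_card_of_mem_minimalPrimes_span_finset this).trans ?_
      exact_mod_cast List.toFinset_card_le _
    have h2 : ((xs ++ ys).length : ℕ∞) = (maximalIdeal R).height := by
      refine le_antisymm ?_ h1
      rw [List.length_append, hyslen]
      push_cast
      exact hle
    rw [← h2]; rfl

lemma HasLocDepth.base {R : Type*} [CommRing R] [IsLocalRing R] [IsNoetherianRing R]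
    {E : Type*} [AddCommGroup E] [Module R E] (hE : IsBalancedBigCohenMacaulayModule R E) :
    HasLocDepth R R E := by
  intro p hp
  obtain ⟨xs, ys, hxs, hlen, hsop⟩ := exists_sop_extend p
  refine ⟨xs, hxs, hlen.le, ?_⟩
  have h1 := (hE.2 _ hsop).toIsWeaklyRegular
  rw [isWeaklyRegular_append_iff] at h1
  have hfl : Module.Flat R (Localization.AtPrime p) := IsLocalization.flat _ p.primeCompl
  have h2 := h1.1.of_flat_of_isBaseChange (TensorProduct.isBaseChange R E (Localization.AtPrime p))
  rwa [isWeaklyRegular_map_algebraMap_iff] at h2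

end BaseSection
end

section
section CatenarySection

/-- There is a saturated chain of primes with `n` steps. -/
def SatLen {A : Type*} [CommRing A] (p q : Ideal A) (n : ℕ) : Prop :=
  ∃ c, IsSaturatedPrimeChain A p q c ∧ c.length = n + 1

lemma SatLen.refl {A : Type*} [CommRing A] (p : Ideal A) [hp : p.IsPrime] : SatLen p p 0 :=
  ⟨[p], ⟨by simpa using hp, rfl, rfl, List.IsChain.singleton _⟩, rfl⟩

lemma SatLen.snoc {A : Type*} [CommRing A] {p q r : Ideal A} [hr : r.IsPrime] {n : ℕ}
    (h : SatLen p q n) (hqr : q < r) (hs : ∀ s : Ideal A, s.IsPrime → ¬ (q < s ∧ s < r)) :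
    SatLen p r (n + 1) := by
  obtain ⟨c, ⟨h1, h2, h3, h4⟩, hl⟩ := h
  refine ⟨c ++ [r], ⟨?_, ?_, ?_, ?_⟩, by simp [hl]⟩
  · intro s hs
    rcases List.mem_append.1 hs with hs | hs
    · exact h1 s hs
    · rw [List.mem_singleton] at hs; exact hs ▸ hr
  · rw [List.head?_append, h2]; rfl
  · simp
  · refine List.IsChain.append h4 (by simp) ?_
    intro x hx y hy
    rw [h3] at hx
    simp at hx hy
    subst hx; subst hy
    exact ⟨hqr, hs⟩

lemma exists_maximal_prime_lt {A : Type*} [CommRing A] [IsNoetherianRing A] {Q q : Ideal A}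
    [hQ : Q.IsPrime] (h : Q < q) : ∃ r : Ideal A, r.IsPrime ∧ Q ≤ r ∧ r < q ∧
      ∀ s : Ideal A, s.IsPrime → ¬ (r < s ∧ s < q) := by
  obtain ⟨r, ⟨hr1, hr2, hr3⟩, hr4⟩ := set_has_maximal_iff_noetherian.mpr
    (inferInstanceAs (IsNoetherian A A)) {r : Ideal A | r.IsPrime ∧ Q ≤ r ∧ r < q} ⟨Q, hQ, le_rfl, h⟩
  refine ⟨r, hr1, hr2, hr3, ?_⟩
  rintro s hs ⟨h1, h2⟩
  exact hr4 s ⟨hs, hr2.trans h1.le, h2⟩ h1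

lemma satLen_extend {A : Type*} [CommRing A] [IsNoetherianRing A] {p Q : Ideal A} [hQ : Q.IsPrime]
    {n : ℕ} (h : SatLen p Q n) : ∀ (k : ℕ) (q : Ideal A) [q.IsPrime], Q ≤ q → q.height ≤ k →
      ∃ m : ℕ, SatLen p q (n + m) ∧ (m : ℕ∞) ≤ (q.map (Ideal.Quotient.mk Q)).height := by
  intro k
  induction k with
  | zero =>
    intro q hq hle hk
    have : Q = q := by
      by_contra hne
      have := Ideal.height_add_one_le_of_lt_of_isPrime (lt_of_le_of_ne hle hne)
      have h2 := this.trans hk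
      simp at h2
    subst this
    exact ⟨0, h, by simp⟩
  | succ k ih =>
    intro q hq hle hk
    rcases eq_or_lt_of_le hle with rfl | hlt
    · exact ⟨0, h, by simp⟩
    obtain ⟨r, hr, hQr, hrq, hs⟩ := exists_maximal_prime_lt hlt
    have h1 := Ideal.height_add_one_le_of_lt_of_isPrime hrq
    obtain ⟨m, hm, hm2⟩ := ih r hQr (by
      have := h1.trans hk
      push_cast at this
      exact (ENat.add_le_add_iff_right (by simp)).1 this)
    refine ⟨m + 1, hm.snoc hrq hs, ?_⟩
    have hp1 : (r.map (Ideal.Quotient.mk Q)).IsPrime := Ideal.isPrime_map_quotientMk_of_isPrime hQr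
    have hp2 : (q.map (Ideal.Quotient.mk Q)).IsPrime := Ideal.isPrime_map_quotientMk_of_isPrime hle
    have hlt' : r.map (Ideal.Quotient.mk Q) < q.map (Ideal.Quotient.mk Q) := by
      refine lt_of_le_of_ne (Ideal.map_mono hrq.le) ?_
      intro he
      have := congrArg (Ideal.comap (Ideal.Quotient.mk Q)) he
      rw [Ideal.comap_map_of_surjective _ Ideal.Quotient.mk_surjective,
        Ideal.comap_map_of_surjective _ Ideal.Quotient.mk_surjective, ← RingHom.ker_eq_comap_bot,
        Ideal.mk_ker, sup_of_le_left hQr, sup_of_le_left hle] at this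
      exact hrq.ne this
    refine le_trans ?_ (Ideal.height_add_one_le_of_lt_of_isPrime hlt')
    push_cast
    gcongr

lemma satLen_long {A : Type*} [CommRing A] [IsDomain A] : ∀ (k : ℕ) (q : Ideal A) [q.IsPrime],
    q.height = k → SatLen ⊥ q k := by
  intro k
  induction k with
  | zero =>
    intro q hq h
    have : q = ⊥ := (Ideal.height_eq_zero_iff_eq_bot).1 (by simpa using h)
    subst this
    exact SatLen.refl _
  | succ k ih =>
    intro q hq h
    obtain ⟨r, hr, hrq, hrk⟩ : ∃ r : Ideal A, ∃ _ : r.IsPrime, r < q ∧ r.height = k := by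
      by_contra! hcon
      have : q.height ≤ k := by
        rw [Ideal.height_le_iff]
        intro r hr hrq
        have h1 := Ideal.height_add_one_le_of_lt_of_isPrime hrq
        rw [h] at h1
        push_cast at h1
        have h2 := (ENat.add_le_add_iff_right (by simp)).1 h1
        exact lt_of_le_of_ne h2 (hcon r hr hrq)
      rw [h] at this
      have := Nat.cast_le.1 this
      omega
    refine (ih r hrk).snoc hrq ?_
    rintro s hs ⟨h1, h2⟩
    have h1 := Ideal.height_add_one_le_of_lt_of_isPrime h1
    have h2 := Ideal.height_add_one_le_of_lt_of_isPrime h2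
    rw [hrk] at h1
    rw [h] at h2
    have h3 : ((k : ℕ∞) + 1) + 1 ≤ ((k + 1 : ℕ) : ℕ∞) := by
      refine le_trans ?_ h2
      gcongr
    have h4 := Nat.cast_le.1 (show ((k + 1 + 1 : ℕ) : ℕ∞) ≤ ((k + 1 : ℕ) : ℕ∞) by exact_mod_cast h3)
    omega

lemma catenary_height {A : Type*} [CommRing A] [IsDomain A] [IsNoetherianRing A]
    (hcat : IsCatenaryRing A) (Q q : Ideal A) [Q.IsPrime] [q.IsPrime] (h : Q ≤ q) :
    q.height ≤ Q.height + (q.map (Ideal.Quotient.mk Q)).height := by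
  obtain ⟨k, hk⟩ := ENat.ne_top_iff_exists.1 (Ideal.height_ne_top_of_isPrime (I := q))
  obtain ⟨k', hk'⟩ := ENat.ne_top_iff_exists.1 (Ideal.height_ne_top_of_isPrime (I := Q))
  obtain ⟨n, hn, hn2⟩ := satLen_extend (SatLen.refl (⊥ : Ideal A)) k' Q bot_le hk'.symm.le
  obtain ⟨m, hm, hm2⟩ := satLen_extend hn k q h hk.symm.le
  obtain ⟨c₁, h1, h1l⟩ := satLen_long k q hk.symm
  obtain ⟨c₂, h2, h2l⟩ := hm
  have := hcat ⊥ q Ideal.isPrime_bot inferInstance bot_le c₁ c₂ h1 h2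
  have h3 : k = n + m := by omega
  have hp : (Q.map (Ideal.Quotient.mk (⊥ : Ideal A))).IsPrime :=
    Ideal.isPrime_map_quotientMk_of_isPrime bot_le
  have h4 := height_quot_add ⊥ (Q.map (Ideal.Quotient.mk (⊥ : Ideal A)))
  rw [Ideal.comap_map_of_surjective _ Ideal.Quotient.mk_surjective, ← RingHom.ker_eq_comap_bot,
        Ideal.mk_ker, sup_of_le_left bot_le] at h4
  rw [← hk, h3]
  push_cast
  exact add_le_add (hn2.trans (le_trans (by simp) h4)) hm2

lemma IsCatenaryRing.of_equiv {A A' : Type*} [CommRing A] [CommRing A'] (e : A ≃+* A')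
    (h : IsCatenaryRing A) : IsCatenaryRing A' := by
  have key : ∀ p q c, IsSaturatedPrimeChain A' p q c →
      IsSaturatedPrimeChain A (p.comap e) (q.comap e) (c.map (Ideal.comap e)) := by
    rintro p q c ⟨h1, h2, h3, h4⟩
    refine ⟨?_, ?_, ?_, ?_⟩
    · intro r hr
      obtain ⟨s, hs, rfl⟩ := List.mem_map.1 hr
      have := h1 s hs
      exact Ideal.comap_isPrime _ _
    · simp [h2]
    · simp [h3]
    · refine (List.isChain_map _).2 (List.IsChain.imp ?_ h4)
      rintro a b ⟨hab, hs⟩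
      have hmono := (Ideal.orderEmbeddingOfSurjective e e.surjective).strictMono
      refine ⟨hmono hab, ?_⟩
      rintro r hr ⟨hr1, hr2⟩
      have hr3 : r = (r.comap e.symm).comap e := by
        ext x; simp [Ideal.mem_comap]
      have hp : (r.comap e.symm).IsPrime := Ideal.comap_isPrime _ _
      refine hs (r.comap e.symm) hp ⟨?_, ?_⟩
      · rw [hr3] at hr1
        exact (Ideal.orderEmbeddingOfSurjective e e.surjective).lt_iff_lt.1 hr1
      · rw [hr3] at hr2
        exact (Ideal.orderEmbeddingOfSurjective e e.surjective).lt_iff_lt.1 hr2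
  intro p q hp hq hpq c₁ c₂ h1 h2
  have := h (p.comap e) (q.comap e) (Ideal.comap_isPrime _ _) (Ideal.comap_isPrime _ _)
    (Ideal.comap_mono hpq) _ _ (key _ _ _ h1) (key _ _ _ h2)
  simpa using this

lemma height_of_take {A : Type*} [CommRing A] [IsDomain A] [IsNoetherianRing A]
    (hcat : IsCatenaryRing A) (q : Ideal A) [q.IsPrime] (cs : List A)
    (hcq : ∀ a ∈ cs, a ∈ q)
    (hlen : (cs.length : ℕ∞) ≤ q.height)
    (hmin : ∀ Q : Ideal A, Q.IsPrime → Q ≤ q → (∀ a ∈ cs, a ∈ Q) → Q = q) :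
    ∀ i ≤ cs.length, ∀ Q : Ideal A, Q.IsPrime → Q ≤ q →
      (∀ a ∈ cs.take i, a ∈ Q) → (i : ℕ∞) ≤ Q.height := by
  classical
  intro i hi Q hQ hQq hmem
  have h1 := catenary_height hcat Q q hQq
  have hp : (q.map (Ideal.Quotient.mk Q)).IsPrime := Ideal.isPrime_map_quotientMk_of_isPrime hQq
  have hcm : (q.map (Ideal.Quotient.mk Q)).comap (Ideal.Quotient.mk Q) = q := by
    rw [Ideal.comap_map_of_surjective _ Ideal.Quotient.mk_surjective, ← RingHom.ker_eq_comap_bot,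
        Ideal.mk_ker, sup_of_le_left hQq]
  let ds := (cs.drop i).map (Ideal.Quotient.mk Q)
  have h2 : (q.map (Ideal.Quotient.mk Q)) ∈
      (Ideal.span ((ds.toFinset : Finset (A ⧸ Q)) : Set (A ⧸ Q))).minimalPrimes := by
    refine ⟨⟨hp, ?_⟩, ?_⟩
    · rw [Ideal.span_le, List.coe_toFinset]
      intro x hx
      obtain ⟨a, ha, rfl⟩ := List.mem_map.1 hx
      exact Ideal.mem_map_of_mem _ (hcq a (List.mem_of_mem_drop ha))
    · rintro P ⟨hP, hPs⟩ hPq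
      have hPp : (P.comap (Ideal.Quotient.mk Q)).IsPrime := Ideal.comap_isPrime _ _
      have := hmin (P.comap (Ideal.Quotient.mk Q)) hPp (by rw [← hcm]; exact Ideal.comap_mono hPq) (by
        intro a ha
        rw [← List.take_append_drop i cs] at ha
        rcases List.mem_append.1 ha with ha | ha
        · rw [Ideal.mem_comap, Ideal.Quotient.eq_zero_iff_mem.2 (hmem a ha)]
          exact P.zero_mem
        · refine hPs (Ideal.subset_span ?_)
          rw [List.coe_toFinset]
          exact List.mem_map.2 ⟨a, ha, rfl⟩)
      rw [Ideal.map_le_iff_le_comap, this]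
  have h3 := Ideal.height_le_card_of_mem_minimalPrimes_span_finset h2
  have h4 : ds.toFinset.card ≤ cs.length - i := by
    refine (List.toFinset_card_le _).trans ?_
    simp [ds]
  obtain ⟨k', hk'⟩ := ENat.ne_top_iff_exists.1 (Ideal.height_ne_top_of_isPrime (I := Q))
  have h5 : (cs.length : ℕ∞) ≤ (k' + (cs.length - i) : ℕ) := by
    refine hlen.trans (h1.trans ?_)
    push_cast
    rw [hk']
    refine add_le_add le_rfl (h3.trans ?_)
    exact_mod_cast h4
  have h6 := Nat.cast_le.1 h5
  rw [← hk']
  exact_mod_cast (by omega : i ≤ k')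

end CatenarySection
end

section
section FinalSection
open RingTheory.Sequence TensorProduct

lemma rename_flat {R X : Type*} [CommRing R] {n : ℕ} (f : Fin n → X) (hf : Function.Injective f) :
    ((MvPolynomial.rename f : MvPolynomial (Fin n) R →ₐ[R] MvPolynomial X R) :
      MvPolynomial (Fin n) R →+* MvPolynomial X R).Flat := by
  classical
  let Z := ((Set.range f)ᶜ : Set X)
  let e : Z ⊕ Fin n ≃ X := (Equiv.sumComm _ _).trans
    (((Equiv.ofInjective f hf).sumCongr (Equiv.refl Z)).trans (Equiv.Set.sumCompl (Set.range f)))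
  have he : ∀ i, e (Sum.inr i) = f i := by intro i; exact Equiv.Set.sumCompl_apply_inl _ _
  let φ : MvPolynomial Z (MvPolynomial (Fin n) R) ≃ₐ[R] MvPolynomial X R :=
    (MvPolynomial.sumAlgEquiv R Z (Fin n)).symm.trans (MvPolynomial.renameEquiv R e)
  have h1 : ((MvPolynomial.rename f : MvPolynomial (Fin n) R →ₐ[R] MvPolynomial X R) :
      MvPolynomial (Fin n) R →+* MvPolynomial X R) =
      (φ.toRingEquiv.toRingHom).comp (MvPolynomial.C) := by
    refine MvPolynomial.ringHom_ext ?_ ?_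
    · intro r
      have h2 : φ (MvPolynomial.C (MvPolynomial.C r)) = MvPolynomial.C r := φ.commutes r
      simpa using h2.symm
    · intro i
      have : (MvPolynomial.sumAlgEquiv R Z (Fin n)).symm (MvPolynomial.C (MvPolynomial.X i)) =
          MvPolynomial.X (Sum.inr i) := MvPolynomial.sumRingEquiv_symm_C_X R Z (Fin n) i
      have h2 : φ (MvPolynomial.C (MvPolynomial.X i)) = MvPolynomial.X (f i) := by
        simp only [φ, AlgEquiv.trans_apply, this]
        simp [he]
      simpa using h2.symm
  rw [h1]
  refine RingHom.Flat.comp ?_ (RingHom.Flat.of_bijective φ.bijective)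
  change (algebraMap (MvPolynomial (Fin n) R) (MvPolynomial Z (MvPolynomial (Fin n) R))).Flat
  rw [RingHom.flat_algebraMap_iff]
  infer_instance

lemma ofList_assoc {B : Type*} [CommRing B] (φ : B → B)
    (hφ : ∀ r, ∃ u : B, IsUnit u ∧ φ r = u * r) (l : List B) :
    Ideal.ofList (l.map φ) = Ideal.ofList l := by
  apply le_antisymm
  · refine Ideal.span_le.2 ?_
    intro x hx
    obtain ⟨a, ha, rfl⟩ := List.mem_map.1 hx
    obtain ⟨u, hu, h1⟩ := hφ a
    rw [h1]
    exact Ideal.mul_mem_left _ _ (Ideal.subset_span ha)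
  · refine Ideal.span_le.2 ?_
    intro x hx
    obtain ⟨u, hu, h1⟩ := hφ x
    have : φ x ∈ Ideal.ofList (l.map φ) := Ideal.subset_span (List.mem_map.2 ⟨x, hx, rfl⟩)
    rw [h1] at this
    exact (Ideal.unit_mul_mem_iff_mem _ hu).1 this

lemma wr_of_assoc {B M : Type*} [CommRing B] [AddCommGroup M] [Module B M] (φ : B → B)
    (hφ : ∀ r, ∃ u : B, IsUnit u ∧ φ r = u * r) (rs : List B)
    (h : IsWeaklyRegular M (rs.map φ)) : IsWeaklyRegular M rs := by
  have hid := fun l => ofList_assoc φ hφ l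
  rw [isWeaklyRegular_iff] at h ⊢
  intro i hi
  have h1 := h i (by simpa using hi)
  rw [List.getElem_map, ← List.map_take, hid] at h1
  obtain ⟨u, hu, h2⟩ := hφ rs[i]
  rw [h2] at h1
  exact h1.of_mul

lemma nontriv_baseChange {R B E : Type*} [CommRing R] [IsLocalRing R] [CommRing B] [IsLocalRing B]
    [Algebra R B] [AddCommGroup E] [Module R E] [Module.FaithfullyFlat R B]
    (hm : (maximalIdeal R).map (algebraMap R B) = maximalIdeal B)
    (hE : maximalIdeal R • (⊤ : Submodule R E) ≠ ⊤) :
    maximalIdeal B • (⊤ : Submodule B (B ⊗[R] E)) ≠ ⊤ := by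
  intro hcon
  let N := E ⧸ (maximalIdeal R • (⊤ : Submodule R E))
  have : Nontrivial N := Submodule.Quotient.nontrivial_iff.2 hE
  have hnt := Module.FaithfullyFlat.lTensor_nontrivial R B N
  let π : B ⊗[R] E →ₗ[B] B ⊗[R] N := (Submodule.mkQ _).baseChange B
  have hπ : Function.Surjective π := LinearMap.lTensor_surjective B (Submodule.mkQ_surjective _)
  have h1 : (⊤ : Submodule B (B ⊗[R] N)) = maximalIdeal B • ⊤ := by
    have := congrArg (Submodule.map π) hcon
    rw [Submodule.map_smul'', Submodule.map_top, LinearMap.range_eq_top.2 hπ] at this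
    exact this.symm
  have h2 : maximalIdeal B • (⊤ : Submodule B (B ⊗[R] N)) ≤ ⊥ := by
    rw [← hm]
    have h3 : (maximalIdeal R).map (algebraMap R B) ≤ Module.annihilator B (B ⊗[R] N) := by
      rw [Ideal.map_le_iff_le_comap]
      intro a ha
      rw [Ideal.mem_comap, Module.mem_annihilator]
      intro z
      rw [algebraMap_smul]
      induction z with
      | zero => rw [smul_zero]
      | add x y hx hy => rw [smul_add, hx, hy, add_zero]
      | tmul b x =>
        obtain ⟨x, rfl⟩ := Submodule.Quotient.mk_surjective _ x
        rw [← TensorProduct.tmul_smul, ← Submodule.Quotient.mk_smul,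
          (Submodule.Quotient.mk_eq_zero _).2 (Submodule.smul_mem_smul ha Submodule.mem_top),
          TensorProduct.tmul_zero]
    rw [Submodule.smul_le]
    intro r hr z _
    exact Module.mem_annihilator.1 (h3 hr) z
  rw [← h1] at h2
  exact bot_ne_top (le_antisymm bot_le h2 |>.symm ▸ rfl : (⊥ : Submodule B (B ⊗[R] N)) = ⊤)

/-- Finitely many polynomials involve finitely many variables. -/
lemma exists_fin_rename_list {R X : Type*} [CommRing R] (T : List (MvPolynomial X R)) :
    ∃ (n : ℕ) (f : Fin n → X), Function.Injective f ∧ ∀ p ∈ T, ∃ p', MvPolynomial.rename f p' = p := by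
  classical
  let V : Finset X := T.toFinset.biUnion MvPolynomial.vars
  let f : Fin V.card → X := fun i => (V.equivFin.symm i : X)
  have hf : Function.Injective f := Subtype.val_injective.comp V.equivFin.symm.injective
  refine ⟨V.card, f, hf, ?_⟩
  intro p hp
  refine MvPolynomial.exists_rename_eq_of_vars_subset_range p f hf ?_
  intro x hx
  have hxV : x ∈ V := Finset.mem_biUnion.2 ⟨p, by simpa using hp, hx⟩
  exact ⟨V.equivFin ⟨x, hxV⟩, by simp [f]⟩

lemma height_of_series {S B : Type*} [CommRing S] [CommRing B] [IsLocalRing B] [Algebra S B]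
    (l : LTSeries (PrimeSpectrum B))
    (hw : ∀ i (hi : i + 1 < l.length + 1), ∃ s : S, algebraMap S B s ∈ (l ⟨i + 1, hi⟩).asIdeal ∧
      algebraMap S B s ∉ (l ⟨i, by omega⟩).asIdeal) :
    (l.length : ℕ∞) ≤ ((maximalIdeal B).comap (algebraMap S B)).height := by
  have key : ∀ i (hi : i < l.length + 1), (i : ℕ∞) ≤
      ((l ⟨i, hi⟩).asIdeal.comap (algebraMap S B)).height := by
    intro i
    induction i with
    | zero => intro hi; simp
    | succ i ih =>
      intro hi
      have h1 := ih (by omega)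
      have h2 : l ⟨i, by omega⟩ < l ⟨i + 1, hi⟩ := l.strictMono (by simp [Fin.lt_def])
      have h3 : (l ⟨i, by omega⟩).asIdeal.comap (algebraMap S B) <
          (l ⟨i + 1, hi⟩).asIdeal.comap (algebraMap S B) := by
        obtain ⟨s, hs1, hs2⟩ := hw i hi
        exact SetLike.lt_iff_le_and_exists.2 ⟨Ideal.comap_mono h2.le, s, hs1, hs2⟩
      refine le_trans ?_ (Ideal.height_add_one_le_of_lt_of_isPrime h3)
      push_cast
      gcongr
  refine (key l.length (by omega)).trans (Ideal.height_mono (Ideal.comap_mono ?_))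
  exact IsLocalRing.le_maximalIdeal (PrimeSpectrum.isPrime _).ne_top

end FinalSection
end

section
section WRSection
open RingTheory.Sequence TensorProduct

lemma wr_finite {R E S T : Type*} [CommRing R] [AddCommGroup E] [Module R E] [CommRing S]
    [CommRing T] [Algebra R S] [Algebra R T] [Algebra S T] [IsScalarTower R S T] [Module.Flat S T]
    [IsDomain S] [IsNoetherianRing S] (hcat : IsCatenaryRing S) (hD : HasLocDepth R S E)
    (P : Ideal T) [P.IsPrime] (cs : List S)
    (hcs : (Ideal.span {a | a ∈ cs.map (algebraMap S (Localization.AtPrime P))}).radical =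
      maximalIdeal (Localization.AtPrime P))
    (hlen : (cs.length : ℕ∞) ≤ (P.comap (algebraMap S T)).height) :
    IsWeaklyRegular (Localization.AtPrime P ⊗[R] E)
      (cs.map (algebraMap S (Localization.AtPrime P))) := by
  set q := P.comap (algebraMap S T) with hq
  have : IsScalarTower R S (Localization.AtPrime P) := by
    refine IsScalarTower.of_algebraMap_eq fun x => ?_
    rw [IsScalarTower.algebraMap_apply R T (Localization.AtPrime P),
      IsScalarTower.algebraMap_apply R S T, ← IsScalarTower.algebraMap_apply S T (Localization.AtPrime P)]
  have hfl : Module.Flat T (Localization.AtPrime P) := IsLocalization.flat _ P.primeCompl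
  have hfl2 : Module.Flat S (Localization.AtPrime P) := Module.Flat.trans S T _
  have hover : (maximalIdeal (Localization.AtPrime P)).comap
      (algebraMap S (Localization.AtPrime P)) = q := by
    rw [IsScalarTower.algebraMap_eq S T (Localization.AtPrime P), ← Ideal.comap_comap]
    exact congrArg _ Localization.AtPrime.under_maximalIdeal
  have hmem : ∀ a ∈ cs, a ∈ q := by
    intro a ha
    rw [← hover, Ideal.mem_comap, ← hcs]
    exact Ideal.le_radical (Ideal.subset_span (List.mem_map.2 ⟨a, ha, rfl⟩))
  let alg := locAlg q P (le_of_eq rfl)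
  have tow := locAlg_tower q P (le_of_eq rfl)
  refine flat_transfer (C := Localization.AtPrime P) q cs ?_
  refine key_claim hD q cs (height_of_take hcat q cs hmem hlen ?_)
  intro Q hQ hQq hQc
  have : Algebra.HasGoingDown S (Localization.AtPrime P) := Algebra.HasGoingDown.of_flat
  have : (maximalIdeal (Localization.AtPrime P)).LiesOver q := ⟨hover.symm⟩
  obtain ⟨Q', hQ'le, hQ'p, hQ'o⟩ := Ideal.exists_ideal_le_liesOver_of_le
    (maximalIdeal (Localization.AtPrime P)) hQq
  have hQQ : Q = Q'.comap (algebraMap S (Localization.AtPrime P)) := hQ'o.over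
  have : maximalIdeal (Localization.AtPrime P) ≤ Q' := by
    rw [← hcs, hQ'p.radical_le_iff, Ideal.span_le]
    intro x hx
    obtain ⟨a, ha, rfl⟩ := List.mem_map.1 hx
    have := hQc a ha
    rw [hQQ] at this
    exact this
  rw [hQQ, le_antisymm hQ'le this, hover]

lemma wr_main {R : Type*} [CommRing R] [IsLocalRing R] [IsNoetherianRing R]
    [IsDomain R] (hucat : IsUniversallyCatenary R)
    (E : Type*) [AddCommGroup E] [Module R E]
    (hE : IsBalancedBigCohenMacaulayModule R E)
    (X : Type*) (P : Ideal (MvPolynomial X R)) [P.IsPrime]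
    (rs : List (Localization.AtPrime P)) (hrs : IsSystemOfParameters (Localization.AtPrime P) rs) :
    IsWeaklyRegular (Localization.AtPrime P ⊗[R] E) rs := by
  let B := Localization.AtPrime P
  have hsurj : ∀ b : B, ∃ (s : MvPolynomial X R) (u : B), IsUnit u ∧
      algebraMap (MvPolynomial X R) B s = u * b := by
    intro b
    obtain ⟨⟨s, t⟩, h⟩ := IsLocalization.surj P.primeCompl b
    exact ⟨s, algebraMap _ _ (t : MvPolynomial X R), IsLocalization.map_units _ t,
      by rw [mul_comm]; exact h.symm⟩
  choose num u hu hnum using hsurj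
  obtain ⟨l, hl⟩ := Order.le_krullDim_iff.1 (hrs.2.le : (rs.length : WithBot ℕ∞) ≤ Order.krullDim (PrimeSpectrum B))
  have hw : ∀ i : Fin l.length, ∃ b : B, b ∈ (l i.succ).asIdeal ∧ b ∉ (l i.castSucc).asIdeal := by
    intro i
    have h2 : l i.castSucc < l i.succ := l.strictMono Fin.castSucc_lt_succ
    have h2 : (l i.castSucc).asIdeal < (l i.succ).asIdeal := h2
    exact (SetLike.lt_iff_le_and_exists.1 h2).2
  choose w hw1 hw2 using hw
  obtain ⟨n, f, hf, hlift⟩ := exists_fin_rename_list (rs.map num ++ (List.ofFn fun i => num (w i)))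
  let S := MvPolynomial (Fin n) R
  let ρ : S →ₐ[R] MvPolynomial X R := MvPolynomial.rename f
  let _ : Algebra S (MvPolynomial X R) := ρ.toRingHom.toAlgebra
  have : IsScalarTower R S (MvPolynomial X R) :=
    IsScalarTower.of_algebraMap_eq fun x => (ρ.commutes x).symm
  have hflat : Module.Flat S (MvPolynomial X R) := rename_flat f hf
  have hcat : IsCatenaryRing S := (hucat n ⊥).of_equiv (RingEquiv.quotientBot _)
  have hD : HasLocDepth R S E := (HasLocDepth.base hE).mvPolynomial n
  let inv : MvPolynomial X R → S := Function.invFun ρ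
  have hinv1 : ∀ r ∈ rs, algebraMap S B (inv (num r)) = algebraMap _ B (num r) := by
    intro r hr
    rw [IsScalarTower.algebraMap_apply S (MvPolynomial X R) B]
    congr 1
    exact Function.invFun_eq (hlift _ (List.mem_append_left _ (List.mem_map.2 ⟨r, hr, rfl⟩)))
  have hinv2 : ∀ i, algebraMap S B (inv (num (w i))) = algebraMap _ B (num (w i)) := by
    intro i
    rw [IsScalarTower.algebraMap_apply S (MvPolynomial X R) B]
    congr 1
    exact Function.invFun_eq (hlift _ (List.mem_append_right _ (List.mem_ofFn.2 ⟨i, rfl⟩)))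
  let φ : B → B := fun b => algebraMap _ B (num b)
  have hφ : ∀ r, ∃ u : B, IsUnit u ∧ φ r = u * r := fun r => ⟨u r, hu r, hnum r⟩
  let cs : List S := rs.map fun r => inv (num r)
  have hcs : cs.map (algebraMap S B) = rs.map φ := by
    rw [List.map_map]
    refine List.map_congr_left fun r hr => ?_
    exact hinv1 r hr
  refine wr_of_assoc φ hφ rs ?_
  rw [← hcs]
  have hover : (maximalIdeal B).comap (algebraMap S B) = P.comap (algebraMap S (MvPolynomial X R)) := by
    rw [IsScalarTower.algebraMap_eq S (MvPolynomial X R) B, ← Ideal.comap_comap]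
    exact congrArg _ Localization.AtPrime.under_maximalIdeal
  refine wr_finite hcat hD P cs ?_ ?_
  · rw [hcs]
    have h1 := ofList_assoc φ hφ rs
    have h2 : (Ideal.ofList rs).radical = maximalIdeal B := hrs.1
    rw [← h1] at h2
    exact h2
  · have h1 := height_of_series (S := S) l (by
      intro i hi
      have hi' : i < l.length := by omega
      refine ⟨inv (num (w ⟨i, hi'⟩)), ?_, ?_⟩
      · rw [hinv2, hnum]
        exact Ideal.mul_mem_left _ _ (hw1 ⟨i, hi'⟩)
      · rw [hinv2, hnum, Ideal.unit_mul_mem_iff_mem _ (hu _)]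
        exact hw2 ⟨i, hi'⟩)
    rw [hover, hl] at h1
    simpa [cs] using h1

end WRSection
end

open TensorProduct in
/-- **Corollary 4.3.** Let `(R, 𝔪)` be a universally catenary Noetherian local integral
domain and `E` a balanced big Cohen–Macaulay `R`-module.  For any set `X` of
indeterminates, with `B = R[X]_{𝔪R[X]}`, the module `B ⊗_R E` is a balanced big
Cohen–Macaulay `B`-module. -/
theorem bbcm_base_change {R : Type*} [CommRing R] [IsLocalRing R] [IsNoetherianRing R]
    [IsDomain R] (hucat : IsUniversallyCatenary R)
    (E : Type*) [AddCommGroup E] [Module R E]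
    (hE : IsBalancedBigCohenMacaulayModule R E)
    (X : Type*)
    [hP : (Ideal.map (MvPolynomial.C : R →+* MvPolynomial X R) (maximalIdeal R)).IsPrime] :
    IsBalancedBigCohenMacaulayModule
      (Localization.AtPrime (Ideal.map (MvPolynomial.C : R →+* MvPolynomial X R)
        (maximalIdeal R)))
      ((Localization.AtPrime (Ideal.map (MvPolynomial.C : R →+* MvPolynomial X R)
        (maximalIdeal R))) ⊗[R] E) := by
  have hfl1 : Module.Flat (MvPolynomial X R) (Localization.AtPrime (Ideal.map
      (MvPolynomial.C : R →+* MvPolynomial X R) (maximalIdeal R))) :=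
    IsLocalization.flat _ (Ideal.map
      (MvPolynomial.C : R →+* MvPolynomial X R) (maximalIdeal R)).primeCompl
  have hfl : Module.Flat R (Localization.AtPrime (Ideal.map
      (MvPolynomial.C : R →+* MvPolynomial X R) (maximalIdeal R))) :=
    Module.Flat.trans R (MvPolynomial X R) _
  have hm : (maximalIdeal R).map (algebraMap R (Localization.AtPrime (Ideal.map
      (MvPolynomial.C : R →+* MvPolynomial X R) (maximalIdeal R)))) = maximalIdeal _ := by
    rw [IsScalarTower.algebraMap_eq R (MvPolynomial X R), ← Ideal.map_map]
    exact Localization.AtPrime.map_eq_maximalIdeal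
  have hloc : IsLocalHom (algebraMap R (Localization.AtPrime (Ideal.map
      (MvPolynomial.C : R →+* MvPolynomial X R) (maximalIdeal R)))) := by
    refine ⟨fun a ha => ?_⟩
    by_contra hna
    have h1 := Ideal.mem_map_of_mem (algebraMap R (Localization.AtPrime (Ideal.map
      (MvPolynomial.C : R →+* MvPolynomial X R) (maximalIdeal R)))) ((mem_maximalIdeal a).2 hna)
    rw [hm] at h1
    exact (mem_maximalIdeal _).1 h1 ha
  have hff : Module.FaithfullyFlat R (Localization.AtPrime (Ideal.map
      (MvPolynomial.C : R →+* MvPolynomial X R) (maximalIdeal R))) :=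
    Module.FaithfullyFlat.of_flat_of_isLocalHom
  have hnt := nontriv_baseChange hm hE.1
  refine ⟨hnt, fun rs hrs => ⟨wr_main hucat E hE X _ rs hrs, ?_⟩⟩
  intro htop
  apply hnt
  refine top_le_iff.1 (htop.le.trans (Submodule.smul_mono ?_ le_rfl))
  have h1 : (Ideal.ofList rs).radical = maximalIdeal _ := hrs.1
  rw [← h1]
  exact Ideal.le_radical
end

section
/- Let R = k[x_1, …, x_d] with d ≥ 2 be a polynomial ring over a field k, standard graded, and let M be a nonzero finitely generated graded R-module generated in degree 0. If M is torsion-free, then M is a free R-module if and only if e_1(M) = 0. -/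
/-- `IsGrading k R M ℳ`: the family of `k`-subspaces `ℳ j` is a grading of the module `M`
over the standard graded polynomial ring, compatible with the grading of the polynomial
ring by homogeneous components. -/
def IsGrading (k : Type*) [Field k] (d : ℕ) (M : Type*) [AddCommGroup M]
    [Module (MvPolynomial (Fin d) k) M] [Module k M]
    [IsScalarTower k (MvPolynomial (Fin d) k) M] (ℳ : ℕ → Submodule k M) : Prop :=
  DirectSum.IsInternal (fun j => ℳ j) ∧
    ∀ (i j : ℕ) (r : MvPolynomial (Fin d) k),
      r ∈ MvPolynomial.homogeneousSubmodule (Fin d) k i →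
      ∀ m ∈ ℳ j, r • m ∈ ℳ (i + j)

/-- `IsHilbertPolyGraded k ℳ t e`: the integers `e 0, …, e t` are the Hilbert coefficients
of the graded module with components `ℳ j`:
`∑_{j=0}^{n} dim_k ℳ j = ∑_{i=0}^{t} (-1)^i eᵢ binom(n + t - i, t - i)` for all large `n`. -/
def IsHilbertPolyGraded (k : Type*) [Field k] {M : Type*} [AddCommGroup M] [Module k M]
    (ℳ : ℕ → Submodule k M) (t : ℕ) (e : ℕ → ℤ) : Prop :=
  ∃ n₀ : ℕ, ∀ n ≥ n₀,
    (∑ j ∈ Finset.range (n + 1), (Module.finrank k (ℳ j) : ℤ)) =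
      ∑ i ∈ Finset.range (t + 1), (-1) ^ i * e i * ((n + (t - i)).choose (t - i) : ℤ)

open MvPolynomial

theorem aux_finrank_restrict (k : Type*) [Field k] (d n : ℕ) :
    Module.finrank k (restrictTotalDegree (Fin d) k n) = (n + d).choose d := by
  classical
  let S : Finset (Fin d →₀ ℕ) :=
    (Finset.range (n + 1)).biUnion (fun j => (Finset.univ : Finset (Fin d)).finsuppAntidiag j)
  have hS : {s : Fin d →₀ ℕ | (s.sum fun _ e => e) ≤ n} = (S : Set (Fin d →₀ ℕ)) := by
    ext s
    simp [S, Finset.mem_finsuppAntidiag, Finsupp.sum_fintype]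
  have hb := Module.finrank_eq_nat_card_basis
    (basisRestrictSupport k {s : Fin d →₀ ℕ | (s.sum fun _ e => e) ≤ n})
  have h2 : Module.finrank k (restrictTotalDegree (Fin d) k n) =
    Nat.card {s : Fin d →₀ ℕ | (s.sum fun _ e => e) ≤ n} := hb
  rw [h2, hS]
  simp only [SetLike.coe_sort_coe, Nat.card_eq_fintype_card, Fintype.card_coe, S]
  rw [Finset.card_biUnion]
  · simp only [Finset.card_finsuppAntidiag_nat_eq_multichoose, Finset.card_univ, Fintype.card_fin]
    exact Nat.sum_range_multichoose n d
  · intro i _ j _ hij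
    rw [Function.onFun, Finset.disjoint_left]
    intro s hs hs'
    simp [Finset.mem_finsuppAntidiag] at hs hs'
    omega

open Filter Topology

theorem aux_tendsto_choose (s m : ℕ) :
    Tendsto (fun n : ℕ => ((n + s + m).choose m : ℝ) / (n : ℝ) ^ m) atTop
      (𝓝 (1 / (m.factorial : ℝ))) := by
  induction m with
  | zero => simp
  | succ m ih =>
    have h1 : Tendsto (fun n : ℕ => 1 + ((s + m + 1 : ℕ) : ℝ) / (n : ℝ)) atTop (𝓝 (1 + 0)) :=
      tendsto_const_nhds.add (tendsto_const_div_atTop_nhds_zero_nat _)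
    have h2 := (ih.mul h1).div_const ((m : ℝ) + 1)
    have e1 : 1 / (m.factorial : ℝ) * (1 + 0) / ((m : ℝ) + 1) = 1 / ((m+1).factorial : ℝ) := by
      rw [Nat.factorial_succ]; push_cast; field_simp; simp
    rw [e1] at h2
    refine h2.congr' ?_
    filter_upwards [eventually_gt_atTop 0] with n hn
    have h3 : ((n + s + (m+1)).choose (m+1) : ℝ) * (m + 1) =
        (n + s + m + 1) * (n + s + m).choose m := by
      have := Nat.add_one_mul_choose_eq (n + s + m) m
      have h := congrArg (Nat.cast : ℕ → ℝ) this
      push_cast at h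
      rw [← add_assoc]
      linarith
    have hn' : (n : ℝ) ≠ 0 := by positivity
    have hm' : (m : ℝ) + 1 ≠ 0 := by positivity
    have h4 : ((n + s + (m+1)).choose (m+1) : ℝ) =
        (n + s + m + 1) * (n + s + m).choose m / (m + 1) := by
      rw [← h3]; field_simp
    rw [h4]; push_cast
    field_simp
    ring

theorem aux_tendsto_poly (t : ℕ) (c : ℕ → ℝ) :
    Tendsto (fun n : ℕ => (∑ i ∈ Finset.range (t + 1),
      c i * ((n + (t - i)).choose (t - i) : ℝ)) / (n : ℝ) ^ t) atTop
      (𝓝 (c 0 / (t.factorial : ℝ))) := by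
  have h : ∀ i ∈ Finset.range (t + 1), Tendsto (fun n : ℕ =>
      c i * ((n + (t - i)).choose (t - i) : ℝ) / (n : ℝ) ^ t) atTop
      (𝓝 (if i = 0 then c 0 / (t.factorial : ℝ) else 0)) := by
    intro i hi
    have hi' : i ≤ t := by simpa [Nat.lt_succ_iff] using hi
    have h1 := (aux_tendsto_choose 0 (t - i)).const_mul (c i)
    split_ifs with h0
    · subst h0
      simpa [mul_div_assoc, div_eq_mul_inv, mul_assoc] using h1
    · have h2 : Tendsto (fun n : ℕ => (1 : ℝ) / (n : ℝ) ^ i) atTop (𝓝 0) := by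
        simp only [one_div]
        exact tendsto_inv_atTop_zero.comp
          ((tendsto_pow_atTop (α := ℝ) h0).comp tendsto_natCast_atTop_atTop)
      have h3 := h1.mul h2
      rw [mul_zero] at h3
      refine h3.congr' ?_
      filter_upwards [eventually_gt_atTop 0] with n hn
      have hn' : (n : ℝ) ≠ 0 := by positivity
      have : (n : ℝ) ^ t = (n : ℝ) ^ (t - i) * (n : ℝ) ^ i := by
        rw [← pow_add]; congr 1; omega
      rw [this, add_zero]
      field_simp
  have := tendsto_finsetSum _ h
  simp only [Finset.sum_ite_eq', Finset.sum_div] at this ⊢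
  simpa using this

theorem aux_split (d : ℕ) (hd : 1 ≤ d) (e : ℕ → ℤ) (n : ℕ) :
    ((∑ i ∈ Finset.range (d + 1), (-1) ^ i * e i * ((n + (d - i)).choose (d - i) : ℤ) : ℤ) : ℝ) =
      e 0 * ((n + d).choose d : ℝ) + ∑ i ∈ Finset.range ((d - 1) + 1),
       ((-1) ^ (i + 1) * e (i + 1) : ℝ) * ((n + ((d - 1) - i)).choose ((d - 1) - i) : ℝ) := by
  rw [Finset.sum_range_succ']
  push_cast
  rw [Nat.sub_add_cancel hd, add_comm]
  congr 1
  · simp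
  · refine Finset.sum_congr rfl fun i _ => ?_
    rw [show d - (i + 1) = d - 1 - i by omega]

/-- forward numerics -/
theorem aux_num_forward (d : ℕ) (hd : 2 ≤ d) (e : ℕ → ℤ) (r : ℕ)
    (h : ∃ n₀ : ℕ, ∀ n ≥ n₀, ((r * (n + d).choose d : ℕ) : ℤ) =
      ∑ i ∈ Finset.range (d + 1), (-1) ^ i * e i * ((n + (d - i)).choose (d - i) : ℤ)) :
    e 1 = 0 := by
  obtain ⟨n₀, h⟩ := h
  have hr : (r : ℝ) = e 0 := by
    have h1 := aux_tendsto_poly d (fun i => (-1) ^ i * (e i : ℝ))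
    have h2 := (aux_tendsto_choose 0 d).const_mul (r : ℝ)
    have h3 := tendsto_nhds_unique_of_eventuallyEq h2 h1 (by
      filter_upwards [eventually_ge_atTop n₀] with n hn
      have := congrArg (Int.cast : ℤ → ℝ) (h n hn)
      push_cast at this
      rw [← this, add_zero, mul_div_assoc])
    field_simp at h3
    simpa using h3
  have h1 := aux_tendsto_poly (d - 1) (fun i => (-1) ^ (i + 1) * (e (i + 1) : ℝ))
  have h3 := tendsto_nhds_unique_of_eventuallyEq h1 (tendsto_const_nhds (x := (0 : ℝ))) (by
      filter_upwards [eventually_ge_atTop n₀] with n hn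
      have := congrArg (Int.cast : ℤ → ℝ) (h n hn)
      rw [aux_split d (by omega)] at this
      push_cast at this
      rw [hr] at this
      rw [div_eq_zero_iff]; left
      linarith)
  have : ((d - 1).factorial : ℝ) ≠ 0 := by positivity
  rw [div_eq_zero_iff] at h3
  simpa [this] using h3

theorem aux_num_backward (d : ℕ) (hd : 2 ≤ d) (e : ℕ → ℤ) (r s : ℕ) (D : ℕ → ℕ)
    (hD : ∃ n₀ : ℕ, ∀ n ≥ n₀, (D n : ℤ) =
      ∑ i ∈ Finset.range (d + 1), (-1) ^ i * e i * ((n + (d - i)).choose (d - i) : ℤ))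
    (hup : ∀ n, D n ≤ r * (n + s + d).choose d)
    (hlow : ∀ n, r * (n + 1 + d).choose d + (n + 1 + d).choose d ≤
      D (n + 1) + (n + d).choose d)
    (he : e 1 = 0) : False := by
  obtain ⟨n₀, h⟩ := hD
  have hr : (e 0 : ℝ) ≤ r := by
    have h1 := aux_tendsto_poly d (fun i => (-1) ^ i * (e i : ℝ))
    have h2 := (aux_tendsto_choose s d).const_mul (r : ℝ)
    have h3 := le_of_tendsto_of_tendsto h1 h2 (by
      filter_upwards [eventually_ge_atTop n₀] with n hn
      have := congrArg (Int.cast : ℤ → ℝ) (h n hn)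
      push_cast at this
      rw [← this, ← mul_div_assoc]
      have := hup n
      gcongr
      exact_mod_cast this)
    simp only [pow_zero, one_mul, mul_one_div] at h3
    rwa [div_le_div_iff_of_pos_right (by positivity)] at h3
  have h1 := aux_tendsto_poly (d - 1) (fun i => (-1) ^ (i + 1) * (e (i + 1) : ℝ))
  have h2 := aux_tendsto_choose 0 (d - 1)
  have h3 := le_of_tendsto_of_tendsto h2 h1 (by
      filter_upwards [eventually_ge_atTop (n₀ + 1)] with n hn
      have h4 := congrArg (Int.cast : ℤ → ℝ) (h n (by omega))
      rw [aux_split d (by omega)] at h4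
      push_cast at h4
      obtain ⟨n, rfl⟩ : ∃ n', n = n' + 1 := ⟨n - 1, by omega⟩
      have h5 := hlow n
      obtain ⟨d, rfl⟩ : ∃ n', d = n' + 1 := ⟨d - 1, by omega⟩
      have h6 : (n + 1 + (d + 1)).choose (d + 1) =
          (n + 1 + d).choose d + (n + (d + 1)).choose (d + 1) := by
        rw [← add_assoc, Nat.choose_succ_succ]
        congr 2; ring
      have h7 : r * (n + 1 + (d+1)).choose (d+1) + (n + 1 + d).choose d ≤ D (n + 1) := by omega
      have h8 : (r : ℝ) * ((n + 1 + (d+1)).choose (d+1) : ℝ) + ((n + 1 + d).choose d : ℝ)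
        ≤ D (n + 1) := by exact_mod_cast h7
      have h9 : (e 0 : ℝ) * ((n + 1 + (d+1)).choose (d+1) : ℝ) ≤
        r * ((n + 1 + (d+1)).choose (d+1) : ℝ) := by gcongr
      gcongr
      simp only [Nat.add_sub_cancel, add_zero] at h4 ⊢
      linarith)
  simp [he] at h3
  exact Nat.factorial_ne_zero _ h3

theorem aux_prime {k : Type*} [Field k] {d : ℕ}
    {M : Type*} [AddCommGroup M] [Module (MvPolynomial (Fin d) k) M]
    [NoZeroSMulDivisors (MvPolynomial (Fin d) k) M] {ι : Type*} [Fintype ι]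
    (b : ι → M) (hb : LinearIndependent (MvPolynomial (Fin d) k) b) (m : M)
    (hm : m ∉ Submodule.span (MvPolynomial (Fin d) k) (Set.range b))
    (hf : ∃ f : MvPolynomial (Fin d) k, f ≠ 0 ∧
      f • m ∈ Submodule.span (MvPolynomial (Fin d) k) (Set.range b)) :
    ∃ p : MvPolynomial (Fin d) k, Prime p ∧
      ∀ g : MvPolynomial (Fin d) k,
        g • m ∈ Submodule.span (MvPolynomial (Fin d) k) (Set.range b) → p ∣ g := by
  obtain ⟨f, ⟨hf0, hfm⟩, hmin⟩ := (wellFounded_dvdNotUnit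
    (α := MvPolynomial (Fin d) k)).has_min
    {f | f ≠ 0 ∧ f • m ∈ Submodule.span (MvPolynomial (Fin d) k) (Set.range b)} hf
  have hfu : ¬ IsUnit f := by
    intro hu
    exact hm ((Submodule.smul_mem_iff_of_isUnit _ hu).1 hfm)
  obtain ⟨p, hp, f', rfl⟩ := WfDvdMonoid.exists_irreducible_factor hfu hf0
  have hpp : Prime p := hp.prime
  refine ⟨p, hpp, fun g hg => ?_⟩
  have hf'0 : f' ≠ 0 := right_ne_zero_of_mul hf0
  have hf' : f' • m ∉ Submodule.span (MvPolynomial (Fin d) k) (Set.range b) := by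
    intro h
    exact hmin f' ⟨hf'0, h⟩ ⟨hf'0, p, hp.not_isUnit, mul_comm _ _⟩
  obtain ⟨a, ha⟩ := (Submodule.mem_span_range_iff_exists_fun _).1 hfm
  obtain ⟨c, hc⟩ := (Submodule.mem_span_range_iff_exists_fun _).1 hg
  have hna : ∃ i, ¬ p ∣ a i := by
    by_contra! hall
    choose a' ha' using hall
    apply hf'
    have : p • (f' • m - ∑ i, a' i • b i) = 0 := by
      rw [smul_sub, smul_smul, ← ha, Finset.smul_sum, sub_eq_zero]
      refine Finset.sum_congr rfl fun i _ => ?_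
      rw [smul_smul, ← ha']
    have h0 := (NoZeroSMulDivisors.eq_zero_or_eq_zero_of_smul_eq_zero this).resolve_left hpp.ne_zero
    rw [sub_eq_zero] at h0
    rw [h0]
    exact (Submodule.mem_span_range_iff_exists_fun _).2 ⟨a', rfl⟩
  obtain ⟨i, hi⟩ := hna
  have hkey : ∑ i, (g * a i - p * f' * c i) • b i = 0 := by
    simp only [sub_smul, Finset.sum_sub_distrib, mul_smul, ← Finset.smul_sum, ha, hc]
    rw [← mul_smul, ← mul_smul, ← mul_smul, ← mul_smul, sub_eq_zero]
    congr 1; ring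
  have h1 := Fintype.linearIndependent_iff.1 hb _ hkey i
  have h2 : p ∣ g * a i := ⟨f' * c i, by rw [sub_eq_zero] at h1; rw [h1]; ring⟩
  exact (hpp.dvd_or_dvd h2).resolve_right hi

/-- projections onto the graded pieces -/
structure IsProj (k : Type*) [Field k] {M : Type*} [AddCommGroup M] [Module k M]
    (ℳ : ℕ → Submodule k M) (P : ℕ → M →ₗ[k] M) : Prop where
  mem : ∀ j x, P j x ∈ ℳ j
  same : ∀ j, ∀ x ∈ ℳ j, P j x = x
  ne : ∀ i j, i ≠ j → ∀ x ∈ ℳ i, P j x = 0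

theorem aux_exists_proj {k : Type*} [Field k] {M : Type*} [AddCommGroup M] [Module k M]
    (ℳ : ℕ → Submodule k M) (h : DirectSum.IsInternal (fun j => ℳ j)) :
    ∃ P : ℕ → M →ₗ[k] M, IsProj k ℳ P := by
  classical
  let E : (DirectSum ℕ fun j => ℳ j) ≃ₗ[k] M :=
    LinearEquiv.ofBijective (DirectSum.coeLinearMap ℳ) h
  have hE : ∀ (i : ℕ) (x : M) (hx : x ∈ ℳ i),
      E.symm x = DirectSum.lof k ℕ (fun j => ℳ j) i ⟨x, hx⟩ := by
    intro i x hx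
    rw [LinearEquiv.symm_apply_eq]
    change x = DirectSum.coeLinearMap ℳ _
    rw [DirectSum.coeLinearMap_lof]
  refine ⟨fun j => (ℳ j).subtype ∘ₗ DirectSum.component k ℕ (fun j => ℳ j) j ∘ₗ
    E.symm.toLinearMap, ?_, ?_, ?_⟩
  · intro j x
    simp
  · intro j x hx
    simp [hE j x hx]
  · intro i j hij x hx
    simp [hE i x hx, DirectSum.component.of, hij]

section
variable {k : Type*} [Field k] {d : ℕ}
    {M : Type*} [AddCommGroup M] [Module (MvPolynomial (Fin d) k) M] [Module k M]
    [IsScalarTower k (MvPolynomial (Fin d) k) M]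

theorem aux_proj_smul {ℳ : ℕ → Submodule k M} (hgr : IsGrading k d M ℳ) {P : ℕ → M →ₗ[k] M}
    (hP : IsProj k ℳ P) (j : ℕ) (g : MvPolynomial (Fin d) k) (b : M) (hb : b ∈ ℳ 0) :
    P j (g • b) = homogeneousComponent j g • b := by
  have hc : ∀ i, homogeneousComponent i g • b ∈ ℳ i := fun i =>
    hgr.2 i 0 _ (by
      rw [mem_homogeneousSubmodule]; exact homogeneousComponent_isHomogeneous i g) b hb
  conv_lhs => rw [← sum_homogeneousComponent g, Finset.sum_smul, map_sum]
  by_cases hj : j ∈ Finset.range (g.totalDegree + 1)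
  · rw [Finset.sum_eq_single_of_mem j hj]
    · exact hP.same _ _ (hc j)
    · intro i _ hij
      exact hP.ne i j hij _ (hc i)
  · rw [Finset.sum_eq_zero]
    · rw [homogeneousComponent_eq_zero, zero_smul]
      simp at hj; omega
    · intro i hi
      exact hP.ne i j (by rintro rfl; exact hj hi) _ (hc i)

theorem aux_sum_comp (n : ℕ) (g : MvPolynomial (Fin d) k) (hg : g.totalDegree ≤ n) :
    ∑ j ∈ Finset.range (n + 1), homogeneousComponent j g = g := by
  conv_rhs => rw [← sum_homogeneousComponent g]
  symm
  apply Finset.sum_subset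
  · intro i; simp; omega
  · intro i _ hi
    apply homogeneousComponent_eq_zero
    simp at hi; omega

theorem aux_proj_zero_smul {ℳ : ℕ → Submodule k M} (hgr : IsGrading k d M ℳ)
    {P : ℕ → M →ₗ[k] M} (hP : IsProj k ℳ P)
    (hgen : Submodule.span (MvPolynomial (Fin d) k) (ℳ 0 : Set M) = ⊤) (m : M) :
    ∀ g : MvPolynomial (Fin d) k, P 0 (g • m) = (C (coeff 0 g) : MvPolynomial (Fin d) k) • P 0 m := by
  have hm : m ∈ Submodule.span (MvPolynomial (Fin d) k) (ℳ 0 : Set M) := by rw [hgen]; trivial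
  induction hm using Submodule.span_induction with
  | mem x hx =>
    intro g
    rw [aux_proj_smul hgr hP 0 g x hx, hP.same 0 x hx, homogeneousComponent_zero]
  | zero => simp
  | add x y _ _ hx hy =>
    intro g
    rw [smul_add, map_add, hx, hy, map_add, smul_add]
  | smul a x _ hx =>
    intro g
    rw [hx, smul_smul, hx, smul_smul, ← C_mul, ← constantCoeff_eq, map_mul]

/-- linear combinations with coefficients of bounded degree -/
noncomputable def lcn {ι : Type*} [Fintype ι] (b : ι → M) (n : ℕ) :
    (ι → restrictTotalDegree (Fin d) k n) →ₗ[k] M :=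
  (Fintype.linearCombination (MvPolynomial (Fin d) k) b).restrictScalars k ∘ₗ
    (restrictTotalDegree (Fin d) k n).subtype.compLeft ι

theorem lcn_apply {ι : Type*} [Fintype ι] (b : ι → M) (n : ℕ)
    (a : ι → restrictTotalDegree (Fin d) k n) :
    lcn b n a = ∑ i, (a i : MvPolynomial (Fin d) k) • b i := by
  simp [lcn, Fintype.linearCombination_apply]

theorem mem_range_lcn {ι : Type*} [Fintype ι] (b : ι → M) (n : ℕ)
    (a : ι → MvPolynomial (Fin d) k) (ha : ∀ i, (a i).totalDegree ≤ n) :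
    ∑ i, a i • b i ∈ LinearMap.range (lcn (k := k) (d := d) b n) :=
  ⟨fun i => ⟨a i, (mem_restrictTotalDegree _ _ _).2 (ha i)⟩, by simp [lcn_apply]⟩

theorem finrank_lcn_dom (ι : Type*) [Fintype ι] (n : ℕ) :
    Module.finrank k (ι → restrictTotalDegree (Fin d) k n) =
      Fintype.card ι * (n + d).choose d := by
  rw [Module.finrank_pi_fintype]
  simp [aux_finrank_restrict]

theorem finrank_range_lcn_le {ι : Type*} [Fintype ι] (b : ι → M) (n : ℕ) :
    Module.finrank k (LinearMap.range (lcn (k := k) (d := d) b n)) ≤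
      Fintype.card ι * (n + d).choose d := by
  rw [← finrank_lcn_dom (k := k) (d := d) ι n]
  exact LinearMap.finrank_range_le _

theorem lcn_injective {ι : Type*} [Fintype ι] (b : ι → M)
    (hb : LinearIndependent (MvPolynomial (Fin d) k) b) (n : ℕ) :
    Function.Injective (lcn (k := k) (d := d) b n) := by
  rw [← LinearMap.ker_eq_bot, LinearMap.ker_eq_bot']
  intro a ha
  rw [lcn_apply] at ha
  ext i : 2
  simpa using Fintype.linearIndependent_iff.1 hb _ ha i

theorem mem_range_of_mem {ℳ : ℕ → Submodule k M} (hgr : IsGrading k d M ℳ)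
    {P : ℕ → M →ₗ[k] M} (hP : IsProj k ℳ P) {ι : Type*} [Fintype ι] (b : ι → M)
    (hb0 : ∀ i, b i ∈ ℳ 0)
    (hspan : Submodule.span (MvPolynomial (Fin d) k) (Set.range b) = ⊤) {j n : ℕ} (hj : j ≤ n) :
    ℳ j ≤ LinearMap.range (lcn (k := k) (d := d) b n) := by
  intro x hx
  have hxs : x ∈ Submodule.span (MvPolynomial (Fin d) k) (Set.range b) := by rw [hspan]; trivial
  obtain ⟨a, ha⟩ := (Submodule.mem_span_range_iff_exists_fun _).1 hxs
  have : x = ∑ i, homogeneousComponent j (a i) • b i := by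
    rw [← hP.same j x hx, ← ha, map_sum]
    exact Finset.sum_congr rfl fun i _ => aux_proj_smul hgr hP j _ _ (hb0 i)
  rw [this]
  exact mem_range_lcn b n _ fun i =>
    ((homogeneousComponent_isHomogeneous j (a i)).totalDegree_le).trans hj

theorem sum_proj_smul {ℳ : ℕ → Submodule k M} (hgr : IsGrading k d M ℳ)
    {P : ℕ → M →ₗ[k] M} (hP : IsProj k ℳ P) (n : ℕ) (g : MvPolynomial (Fin d) k)
    (hg : g.totalDegree ≤ n) (b : M) (hb : b ∈ ℳ 0) :
    ∑ j ∈ Finset.range (n + 1), P j (g • b) = g • b := by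
  conv_rhs => rw [← aux_sum_comp n g hg, Finset.sum_smul]
  exact Finset.sum_congr rfl fun i _ => aux_proj_smul hgr hP i _ _ hb

theorem sum_proj_lcn {ℳ : ℕ → Submodule k M} (hgr : IsGrading k d M ℳ)
    {P : ℕ → M →ₗ[k] M} (hP : IsProj k ℳ P) {ι : Type*} [Fintype ι] (b : ι → M)
    (hb0 : ∀ i, b i ∈ ℳ 0) (n : ℕ) (a : ι → restrictTotalDegree (Fin d) k n) :
    ∑ j ∈ Finset.range (n + 1), P j (lcn b n a) = lcn b n a := by
  rw [lcn_apply]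
  simp only [map_sum]
  rw [Finset.sum_comm]
  exact Finset.sum_congr rfl fun i _ => sum_proj_smul hgr hP n _
    ((mem_restrictTotalDegree _ _ _).1 (a i).2) _ (hb0 i)
end

theorem sum_finrank_le {k : Type*} [Field k] {M : Type*} [AddCommGroup M] [Module k M]
    {ℳ : ℕ → Submodule k M} {P : ℕ → M →ₗ[k] M} (hP : IsProj k ℳ P) (n : ℕ)
    (V : Submodule k M) [Module.Finite k V] (hV : ∀ j ≤ n, ℳ j ≤ V) :
    ∑ j ∈ Finset.range (n + 1), Module.finrank k (ℳ j) ≤ Module.finrank k V := by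
  have hfin : ∀ j : Fin (n + 1), Module.Finite k (ℳ j) := fun j =>
    Submodule.finiteDimensional_of_le (hV j (by omega))
  rw [Finset.sum_range, ← Module.finrank_pi_fintype]
  let L : (∀ j : Fin (n + 1), ℳ j) →ₗ[k] V :=
    ∑ j : Fin (n + 1), (Submodule.inclusion (hV j (by omega))) ∘ₗ LinearMap.proj j
  apply LinearMap.finrank_le_finrank_of_injective (f := L)
  rw [← LinearMap.ker_eq_bot, LinearMap.ker_eq_bot']
  intro a ha
  have ha' : ∑ j : Fin (n + 1), (a j : M) = 0 := by
    have := congrArg (V.subtype) ha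
    simpa [L] using this
  ext i
  have := congrArg (P i) ha'
  rw [map_sum, map_zero, Finset.sum_eq_single_of_mem i (Finset.mem_univ _)] at this
  · rw [hP.same _ _ (a i).2] at this
    simpa using this
  · intro j _ hj
    exact hP.ne _ _ (fun h => hj (Fin.ext h)) _ (a j).2

theorem finrank_le_sum {k : Type*} [Field k] {M : Type*} [AddCommGroup M] [Module k M]
    {ℳ : ℕ → Submodule k M} {P : ℕ → M →ₗ[k] M} (hP : IsProj k ℳ P)
    (hfin : ∀ j, Module.Finite k (ℳ j)) (n : ℕ)
    (V : Submodule k M) (hV : ∀ x ∈ V, ∑ j ∈ Finset.range (n + 1), P j x = x) :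
    Module.finrank k V ≤ ∑ j ∈ Finset.range (n + 1), Module.finrank k (ℳ j) := by
  rw [Finset.sum_range, ← Module.finrank_pi_fintype]
  let L : V →ₗ[k] (∀ j : Fin (n + 1), ℳ j) :=
    LinearMap.pi fun j => ((P j).codRestrict (ℳ j) (hP.mem j)) ∘ₗ V.subtype
  apply LinearMap.finrank_le_finrank_of_injective (f := L)
  rw [← LinearMap.ker_eq_bot, LinearMap.ker_eq_bot']
  intro x hx
  ext
  rw [← hV x x.2, Finset.sum_range]
  apply Finset.sum_eq_zero
  intro j _
  have := congrArg Subtype.val (congrFun hx j)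
  simpa [L] using this

section
variable {k : Type*} [Field k] {d : ℕ}
    {M : Type*} [AddCommGroup M] [Module (MvPolynomial (Fin d) k) M] [Module k M]
    [IsScalarTower k (MvPolynomial (Fin d) k) M]

theorem aux_upper {ℳ : ℕ → Submodule k M} (hgr : IsGrading k d M ℳ)
    [NoZeroSMulDivisors (MvPolynomial (Fin d) k) M]
    {P : ℕ → M →ₗ[k] M} (hP : IsProj k ℳ P) {σ ι : Type*} [Fintype σ] [Fintype ι]
    (v : σ → M) (hv0 : ∀ i, v i ∈ ℳ 0)
    (hspan : Submodule.span (MvPolynomial (Fin d) k) (Set.range v) = ⊤)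
    (b : ι → M)
    (h : ∀ l, ∃ f : MvPolynomial (Fin d) k, f ≠ 0 ∧
      f • v l ∈ Submodule.span (MvPolynomial (Fin d) k) (Set.range b)) :
    ∃ s : ℕ, ∀ n, ∑ j ∈ Finset.range (n + 1), Module.finrank k (ℳ j) ≤
      Fintype.card ι * (n + s + d).choose d := by
  classical
  choose f hf0 hf using h
  set F := ∏ l, f l with hF
  have hF0 : F ≠ 0 := Finset.prod_ne_zero_iff.2 fun l _ => hf0 l
  have hFv : ∀ l, F • v l ∈ Submodule.span (MvPolynomial (Fin d) k) (Set.range b) := by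
    intro l
    rw [hF, ← Finset.prod_erase_mul _ _ (Finset.mem_univ l), mul_smul]
    exact Submodule.smul_mem _ _ (hf l)
  choose a ha using fun l => (Submodule.mem_span_range_iff_exists_fun _).1 (hFv l)
  refine ⟨∑ l, ∑ i, (a l i).totalDegree, fun n => ?_⟩
  set s := ∑ l, ∑ i, (a l i).totalDegree with hs
  have has : ∀ l i, (a l i).totalDegree ≤ s := fun l i =>
    (Finset.single_le_sum (f := fun i => (a l i).totalDegree) (fun _ _ => Nat.zero_le _)
      (Finset.mem_univ i)).trans
    (Finset.single_le_sum (f := fun l => ∑ i, (a l i).totalDegree) (fun _ _ => Nat.zero_le _)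
      (Finset.mem_univ l))
  refine (sum_finrank_le hP n _
    (fun j hj => mem_range_of_mem hgr hP v hv0 hspan hj)).trans ?_
  refine le_trans ?_ (finrank_range_lcn_le (k := k) (d := d) b (n + s))
  let μ : M →ₗ[k] M := (LinearMap.lsmul (MvPolynomial (Fin d) k) M F).restrictScalars k
  have hμ : ∀ x, μ x = F • x := fun x => rfl
  have hmaps : ∀ x ∈ LinearMap.range (lcn (k := k) (d := d) v n),
      μ x ∈ LinearMap.range (lcn (k := k) (d := d) b (n + s)) := by
    rintro _ ⟨g, rfl⟩
    rw [hμ, lcn_apply]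
    have : F • ∑ l, (g l : MvPolynomial (Fin d) k) • v l =
        ∑ i, (∑ l, (g l : MvPolynomial (Fin d) k) * a l i) • b i := by
      simp only [Finset.sum_smul, Finset.smul_sum, mul_smul]
      rw [Finset.sum_comm]
      refine Finset.sum_congr rfl fun l _ => ?_
      rw [smul_comm, ← ha, Finset.smul_sum]
    rw [this]
    refine mem_range_lcn b _ _ fun i => totalDegree_finsetSum_le fun l _ => ?_
    exact (totalDegree_mul _ _).trans
      (add_le_add ((mem_restrictTotalDegree _ _ _).1 (g l).2) (has l i))
  apply LinearMap.finrank_le_finrank_of_injective (f := μ.restrict hmaps)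
  rw [← LinearMap.ker_eq_bot, LinearMap.ker_eq_bot']
  intro x hx
  have : F • (x : M) = 0 := congrArg Subtype.val hx
  ext
  exact (NoZeroSMulDivisors.eq_zero_or_eq_zero_of_smul_eq_zero this).resolve_left hF0

theorem aux_lower {ℳ : ℕ → Submodule k M} (hgr : IsGrading k d M ℳ)
    {P : ℕ → M →ₗ[k] M} (hP : IsProj k ℳ P) (hfin : ∀ j, Module.Finite k (ℳ j))
    {ι : Type*} [Fintype ι]
    (b : ι → M) (hb0 : ∀ i, b i ∈ ℳ 0) (hb : LinearIndependent (MvPolynomial (Fin d) k) b)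
    (m : M) (hm0 : m ∈ ℳ 0) (p : MvPolynomial (Fin d) k) (hp : Prime p)
    (hpm : ∀ g : MvPolynomial (Fin d) k,
        g • m ∈ Submodule.span (MvPolynomial (Fin d) k) (Set.range b) → p ∣ g) (n : ℕ) :
    Fintype.card ι * (n + 1 + d).choose d + (n + 1 + d).choose d ≤
      ∑ j ∈ Finset.range (n + 1 + 1), Module.finrank k (ℳ j) + (n + d).choose d := by
  let ν : restrictTotalDegree (Fin d) k (n + 1) →ₗ[k] M :=
    ((LinearMap.toSpanSingleton (MvPolynomial (Fin d) k) M m).restrictScalars k) ∘ₗ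
      (restrictTotalDegree (Fin d) k (n + 1)).subtype
  have hν : ∀ g, ν g = (g : MvPolynomial (Fin d) k) • m := fun g => rfl
  let Ψ := (lcn (k := k) (d := d) b (n + 1)).coprod ν
  have h1 := LinearMap.finrank_range_add_finrank_ker Ψ
  rw [Module.finrank_prod, finrank_lcn_dom, aux_finrank_restrict] at h1
  rw [← h1]
  apply add_le_add
  · apply finrank_le_sum hP hfin
    rintro _ ⟨⟨a, g⟩, rfl⟩
    simp only [Ψ, LinearMap.coprod_apply, map_add, Finset.sum_add_distrib]
    rw [sum_proj_lcn hgr hP b hb0, hν, sum_proj_smul hgr hP _ _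
      ((mem_restrictTotalDegree _ _ _).1 g.2) _ hm0]
  · rw [← aux_finrank_restrict k d n]
    let Q : Submodule k (MvPolynomial (Fin d) k) :=
      (restrictTotalDegree (Fin d) k n).map (LinearMap.mulLeft k p)
    have hQ : Module.finrank k Q ≤ Module.finrank k (restrictTotalDegree (Fin d) k n) :=
      Submodule.finrank_map_le _ _
    refine le_trans ?_ hQ
    have hker : ∀ x ∈ LinearMap.ker Ψ, lcn b (n + 1) x.1 + (x.2 : MvPolynomial (Fin d) k) • m = 0 := by
      intro x hx
      simpa [Ψ, hν] using hx
    have hmaps : ∀ x : LinearMap.ker Ψ, ((restrictTotalDegree (Fin d) k (n + 1)).subtype ∘ₗ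
        LinearMap.snd k _ _ ∘ₗ (LinearMap.ker Ψ).subtype) x ∈ Q := by
      rintro ⟨⟨a, g⟩, hx⟩
      have h2 := hker _ hx
      have h3 : p ∣ (g : MvPolynomial (Fin d) k) := by
        apply hpm
        have : (g : MvPolynomial (Fin d) k) • m = - lcn b (n + 1) a := by
          rw [eq_neg_iff_add_eq_zero, add_comm]; exact h2
        rw [this, lcn_apply]
        apply Submodule.neg_mem
        exact (Submodule.mem_span_range_iff_exists_fun _).2 ⟨_, rfl⟩
      obtain ⟨q, hq⟩ := h3
      refine ⟨q, ?_, hq.symm⟩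
      change q ∈ restrictTotalDegree (Fin d) k n
      rw [mem_restrictTotalDegree]
      by_cases hq0 : q = 0
      · simp [hq0]
      have hg := (mem_restrictTotalDegree _ _ _).1 g.2
      rw [hq, totalDegree_mul_of_isDomain hp.ne_zero hq0] at hg
      have hpd : p.totalDegree ≠ 0 := by
        intro h0
        have h4 := totalDegree_eq_zero_iff_eq_C.1 h0
        apply hp.not_isUnit
        rw [h4]
        apply IsUnit.map
        rw [isUnit_iff_ne_zero]
        intro h5
        rw [h5, C_0] at h4
        exact hp.ne_zero h4
      omega
    have : Module.Finite k Q := inferInstance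
    apply LinearMap.finrank_le_finrank_of_injective (f := LinearMap.codRestrict Q _ hmaps)
    rw [injective_iff_map_eq_zero]
    rintro ⟨⟨a, g⟩, hx⟩ h0
    have hg : (g : MvPolynomial (Fin d) k) = 0 := congrArg Subtype.val h0
    have h2 := hker _ hx
    simp only [hg, zero_smul, add_zero] at h2
    have ha : a = 0 := lcn_injective b hb (n + 1) (by rw [h2, map_zero])
    have hg' : g = 0 := Subtype.ext hg
    subst ha hg'
    rfl
end

/-- **Theorem 5.4.** Let `R = k[x₁, …, x_d]`, `d ≥ 2`, be a polynomial ring over a field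
`k` and let `M` be a nonzero finitely generated graded `R`-module generated in degree `0`.
If `M` is torsion-free, then `M` is free if and only if `e₁(M) = 0`. -/
theorem graded_free_iff_e1_zero (k : Type*) [Field k] (d : ℕ) (hd : 2 ≤ d)
    {M : Type*} [AddCommGroup M] [Module (MvPolynomial (Fin d) k) M] [Module k M]
    [IsScalarTower k (MvPolynomial (Fin d) k) M]
    [Module.Finite (MvPolynomial (Fin d) k) M] [Nontrivial M]
    [NoZeroSMulDivisors (MvPolynomial (Fin d) k) M]
    (ℳ : ℕ → Submodule k M) (hgr : IsGrading k d M ℳ)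
    (hgen : Submodule.span (MvPolynomial (Fin d) k) (ℳ 0 : Set M) = ⊤)
    (e : ℕ → ℤ) (he : IsHilbertPolyGraded k ℳ d e) :
    Module.Free (MvPolynomial (Fin d) k) M ↔ e 1 = 0 := by
  classical
  obtain ⟨P, hP⟩ := aux_exists_proj ℳ hgr.1
  obtain ⟨S, hS0, hS⟩ := (Submodule.fg_span_iff_fg_span_finset_subset (R := MvPolynomial (Fin d) k)
    (ℳ 0 : Set M)).1 (by rw [hgen]; exact Module.Finite.fg_top)
  rw [hgen] at hS
  let v : S → M := fun x => x
  have hv0 : ∀ i, v i ∈ ℳ 0 := fun i => hS0 i.2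
  have hvspan : Submodule.span (MvPolynomial (Fin d) k) (Set.range v) = ⊤ := by
    rw [hS]; congr 1; simp [v]
  have hfin : ∀ j, Module.Finite k (ℳ j) := fun j =>
    Submodule.finiteDimensional_of_le (mem_range_of_mem hgr hP v hv0 hvspan (le_refl j))
  constructor
  · intro hfree
    let c := Module.Free.chooseBasis (MvPolynomial (Fin d) k) M
    let b := fun i => P 0 (c i)
    have hb0 : ∀ i, b i ∈ ℳ 0 := fun i => hP.mem 0 _
    have hbspan : Submodule.span (MvPolynomial (Fin d) k) (Set.range b) = ⊤ := by
      rw [eq_top_iff, ← hgen, Submodule.span_le]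
      intro x hx
      rw [← hP.same 0 x hx, ← c.sum_repr x, map_sum]
      refine Submodule.sum_mem _ fun i _ => ?_
      rw [aux_proj_zero_smul hgr hP hgen]
      exact Submodule.smul_mem _ _ (Submodule.subset_span ⟨i, rfl⟩)
    have hsurj : Function.Surjective (Fintype.linearCombination (MvPolynomial (Fin d) k) b) := by
      rw [← LinearMap.range_eq_top, Fintype.range_linearCombination, hbspan]
    have hinj := OrzechProperty.injective_of_surjective_endomorphism
      ((Fintype.linearCombination (MvPolynomial (Fin d) k) b) ∘ₗ c.equivFun.toLinearMap)
      (hsurj.comp c.equivFun.surjective)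
    have hli : LinearIndependent (MvPolynomial (Fin d) k) b := by
      rw [Fintype.linearIndependent_iff]
      intro g hg
      have : c.equivFun.symm g = 0 := by
        apply hinj
        rw [map_zero, LinearMap.comp_apply, LinearEquiv.coe_coe, LinearEquiv.apply_symm_apply,
          Fintype.linearCombination_apply, hg]
      have : g = 0 := (LinearEquiv.map_eq_zero_iff _).1 this
      simp [this]
    apply aux_num_forward d hd e
      (Fintype.card (Module.Free.ChooseBasisIndex (MvPolynomial (Fin d) k) M))
    obtain ⟨n₀, h⟩ := he
    refine ⟨n₀, fun n hn => ?_⟩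
    rw [← h n hn, ← Nat.cast_sum]
    congr 1
    apply le_antisymm
    · rw [← finrank_lcn_dom (k := k), ← LinearMap.finrank_range_of_inj (lcn_injective b hli n)]
      apply finrank_le_sum hP hfin
      rintro _ ⟨a, rfl⟩
      exact sum_proj_lcn hgr hP b hb0 n a
    · exact (sum_finrank_le hP n _
        (fun j hj => mem_range_of_mem hgr hP b hb0 hbspan hj)).trans (finrank_range_lcn_le b n)
  · intro he1
    obtain ⟨I, hI, hmax⟩ := exists_maximal_linearIndepOn (MvPolynomial (Fin d) k) v
    let b : I → M := fun i => v i
    have hli : LinearIndependent (MvPolynomial (Fin d) k) b := hI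
    have hrange : Set.range b = Set.image v I := by
      ext x; simp [b]
    rw [← hrange] at hmax
    have htor : ∀ l, ∃ f : MvPolynomial (Fin d) k, f ≠ 0 ∧
      f • v l ∈ Submodule.span (MvPolynomial (Fin d) k) (Set.range b) := by
      intro l
      by_cases hl : l ∈ I
      · exact ⟨1, one_ne_zero, by
          rw [one_smul]; exact Submodule.subset_span ⟨⟨l, hl⟩, rfl⟩⟩
      · exact hmax l hl
    by_cases hall : ∀ l, v l ∈ Submodule.span (MvPolynomial (Fin d) k) (Set.range b)
    · have htop : ⊤ ≤ Submodule.span (MvPolynomial (Fin d) k) (Set.range b) := by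
        rw [← hvspan, Submodule.span_le]
        rintro _ ⟨l, rfl⟩
        exact hall l
      exact Module.Free.of_basis (Module.Basis.mk hli htop)
    · exfalso
      push Not at hall
      obtain ⟨l, hl⟩ := hall
      obtain ⟨p, hp, hpm⟩ := aux_prime b hli (v l) hl (htor l)
      obtain ⟨s, hs⟩ := aux_upper hgr hP v hv0 hvspan b htor
      refine aux_num_backward d hd e (Fintype.card I) s
        (fun n => ∑ j ∈ Finset.range (n + 1), Module.finrank k (ℳ j)) ?_ hs
        (aux_lower hgr hP hfin b (fun i => hv0 i) hli (v l) (hv0 l) p hp hpm) he1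
      obtain ⟨n₀, h⟩ := he
      exact ⟨n₀, fun n hn => by rw [← h n hn]; push_cast; rfl⟩
end

section
/- Let R = k[x_1, …, x_d] with d ≥ 2 be a polynomial ring over a field k, standard graded, and let M be a nonzero finitely generated graded R-module generated in degree a ≥ 0. If M is torsion-free, then e_1(M) ≤ a·e_0(M), with equality if and only if M is a free R-module. -/
open Filter Topology

theorem hb_tendsto_choose (j c : ℕ) :
    Tendsto (fun m : ℕ => ((m + c + j).choose j : ℝ) / (m : ℝ) ^ j) atTop
      (𝓝 (1 / (j.factorial : ℝ))) := by
  have h1 := (isEquivalent_choose j).comp_tendsto (tendsto_add_atTop_nat (c + j))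
  have h2 : Asymptotics.IsEquivalent atTop (fun m : ℕ => (((m + (c + j) : ℕ) : ℝ))) (fun m : ℕ => (m : ℝ)) := by
    have : Asymptotics.IsLittleO atTop (fun _ : ℕ => ((c + j : ℕ) : ℝ)) (fun m : ℕ => (m : ℝ)) :=
      Asymptotics.isLittleO_const_id_atTop _ |>.comp_tendsto tendsto_natCast_atTop_atTop
    have := (Asymptotics.IsEquivalent.refl (u := fun m : ℕ => (m : ℝ)) (l := atTop)).add_isLittleO this
    refine this.congr_left ?_
    filter_upwards with m
    simp
  have h3 := (h2.pow j).div (Asymptotics.IsEquivalent.refl (u := fun _ : ℕ => (j.factorial : ℝ)) (l := atTop))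
  have h4 : Asymptotics.IsEquivalent atTop (fun m : ℕ => ((m + c + j).choose j : ℝ)) (fun m : ℕ => (m : ℝ)^j / j.factorial) := by
    refine (h1.congr_left ?_).trans (h3.congr_left ?_)
    · filter_upwards with m; simp [add_assoc]
    · filter_upwards with m; simp
  have h5 := h4.div (Asymptotics.IsEquivalent.refl (u := fun m : ℕ => (m : ℝ)^j) (l := atTop))
  refine (h5.symm.tendsto_nhds ?_)
  refine tendsto_const_nhds.congr' ?_
  filter_upwards [eventually_gt_atTop 0] with m hm
  have : (m : ℝ) ^ j ≠ 0 := by positivity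
  simp only [Pi.div_apply]
  field_simp

theorem hb_tendsto_choose_diff (j c : ℕ) :
    Tendsto (fun m : ℕ => (((m + c + (j + 1)).choose (j + 1) : ℝ) - ((m + (j + 1)).choose (j + 1) : ℝ))
      / (m : ℝ) ^ j) atTop (𝓝 (c / (j.factorial : ℝ))) := by
  induction c with
  | zero => simp
  | succ c ih =>
    have := ih.add (hb_tendsto_choose j (c + 1))
    have e : ((c + 1 : ℕ) : ℝ) / (j.factorial : ℝ) = c / (j.factorial : ℝ) + 1 / (j.factorial : ℝ) := by
      push_cast; ring
    rw [e]
    refine this.congr ?_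
    intro m
    have : (m + (c + 1) + (j + 1)).choose (j + 1) = (m + (c + 1) + j).choose j + (m + c + (j + 1)).choose (j + 1) := by
      rw [← add_assoc (m + (c + 1)) j 1, Nat.choose_succ_succ]
      congr 2; omega
    rw [this]; push_cast; ring

theorem hb_tendsto_choose_low (i j c : ℕ) (h : i < j) :
    Tendsto (fun m : ℕ => ((m + c + i).choose i : ℝ) / (m : ℝ) ^ j) atTop (𝓝 0) := by
  have h1 := hb_tendsto_choose i c
  have h2 : Tendsto (fun m : ℕ => ((m : ℝ) ^ (j - i))⁻¹) atTop (𝓝 0) :=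
    (tendsto_pow_atTop (by omega : j - i ≠ 0)).comp tendsto_natCast_atTop_atTop |>.inv_tendsto_atTop
  have := h1.mul h2
  rw [mul_zero] at this
  refine this.congr' ?_
  filter_upwards [eventually_gt_atTop 0] with m hm
  have : (m : ℝ) ≠ 0 := by positivity
  have e : (m:ℝ) ^ j = (m:ℝ)^i * (m:ℝ)^(j-i) := by rw [← pow_add]; congr 1; omega
  rw [e]; field_simp

/-- The asymptotic comparison. -/
theorem hb_asymp (d : ℕ) (hd : 2 ≤ d) (a r δ : ℕ) (e : ℕ → ℤ) (S : ℕ → ℕ)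
    (he : ∃ n₀ : ℕ, ∀ n ≥ n₀, (S n : ℤ) =
      ∑ i ∈ Finset.range (d + 1), (-1) ^ i * e i * ((n + (d - i)).choose (d - i) : ℤ))
    (hA : ∀ m, r * (m + d).choose d ≤ S (m + a))
    (hB : ∀ m, S (m + a) ≤ r * (m + δ + d).choose d) :
    e 1 ≤ (a : ℤ) * e 0 ∧
    ((∀ m, 1 ≤ m → (r + 1) * (m + d).choose d ≤ S (m + a) + (m - 1 + d).choose d) → e 1 < a * e 0) ∧
    ((∀ m, S (m + a) ≤ r * (m + d).choose d) → e 1 = a * e 0) := by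
  obtain ⟨n₀, he⟩ := he
  obtain ⟨j, rfl⟩ : ∃ j, d = j + 1 := ⟨d - 1, by omega⟩
  have heR : ∀ m ≥ n₀, (S (m + a) : ℝ) = e 0 * ((m + a + (j + 1)).choose (j + 1) : ℝ)
      - e 1 * ((m + a + j).choose j : ℝ) +
      ∑ i ∈ Finset.range j, (-1) ^ i * (e (i + 2) : ℝ) * ((m + a + (j - (i + 1))).choose (j - (i + 1)) : ℝ) := by
    intro m hm
    have := he (m + a) (by omega)
    rw [Finset.sum_range_succ', Finset.sum_range_succ'] at this
    have h := congrArg (fun z : ℤ => (z : ℝ)) this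
    push_cast at h
    rw [h]
    simp [pow_succ]
    ring
  have hlow : ∀ J, j ≤ J → Tendsto (fun m : ℕ => (∑ i ∈ Finset.range j, (-1) ^ i * (e (i + 2) : ℝ) * ((m + a + (j - (i + 1))).choose (j - (i + 1)) : ℝ)) / (m : ℝ) ^ J) atTop (𝓝 0) := by
    intro J hJ
    simp_rw [Finset.sum_div]
    rw [show (0 : ℝ) = ∑ i ∈ Finset.range j, 0 by simp]
    refine tendsto_finsetSum _ fun i hi => ?_
    have hi := Finset.mem_range.1 hi
    have := (hb_tendsto_choose_low (j - (i + 1)) J a (by omega)).const_mul ((-1) ^ i * (e (i + 2) : ℝ))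
    rw [mul_zero] at this
    refine this.congr fun m => ?_
    ring
  have hf : (0 : ℝ) < (j + 1).factorial := by positivity
  have hf' : (0 : ℝ) < j.factorial := by positivity
  have lim0 : Tendsto (fun m : ℕ => (S (m + a) : ℝ) / (m : ℝ) ^ (j + 1)) atTop (𝓝 (e 0 * (1 / ((j + 1).factorial : ℝ)))) := by
    have := (((hb_tendsto_choose (j + 1) a).const_mul (e 0 : ℝ)).sub ((hb_tendsto_choose_low j (j + 1) a (by omega)).const_mul (e 1 : ℝ))).add (hlow (j + 1) (by omega))
    rw [mul_zero, sub_zero, add_zero] at this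
    refine this.congr' ?_
    filter_upwards [eventually_ge_atTop n₀] with m hm
    rw [heR m hm]; ring
  have e0 : (e 0 : ℝ) = r := by
    have l1 := le_of_tendsto_of_tendsto ((hb_tendsto_choose (j + 1) 0).const_mul (r : ℝ)) lim0 (by
      filter_upwards with m
      rw [← mul_div_assoc]
      gcongr
      exact_mod_cast hA m)
    have l2 := le_of_tendsto_of_tendsto lim0 ((hb_tendsto_choose (j + 1) δ).const_mul (r : ℝ)) (by
      filter_upwards with m
      rw [← mul_div_assoc]
      gcongr
      exact_mod_cast hB m)
    have hp : (0 : ℝ) < 1 / ((j + 1).factorial : ℝ) := by positivity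
    exact le_antisymm (le_of_mul_le_mul_right l2 hp) (le_of_mul_le_mul_right l1 hp)
  have lim1 : Tendsto (fun m : ℕ => ((S (m + a) : ℝ) - r * ((m + (j + 1)).choose (j + 1) : ℝ)) / (m : ℝ) ^ j) atTop
      (𝓝 ((a * e 0 - e 1) * (1 / (j.factorial : ℝ)))) := by
    have := (((hb_tendsto_choose_diff j a).const_mul (e 0 : ℝ)).sub ((hb_tendsto_choose j a).const_mul (e 1 : ℝ))).add (hlow j le_rfl)
    rw [show (e 0 : ℝ) * (a / (j.factorial : ℝ)) - e 1 * (1 / (j.factorial : ℝ)) + 0 = (a * e 0 - e 1) * (1 / (j.factorial : ℝ)) by ring] at this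
    refine this.congr' ?_
    filter_upwards [eventually_ge_atTop n₀] with m hm
    rw [heR m hm, ← e0]; ring
  have hp : (0 : ℝ) < 1 / (j.factorial : ℝ) := by positivity
  have P1 : e 1 ≤ (a : ℤ) * e 0 := by
    have := ge_of_tendsto lim1 (b := 0) (by
      filter_upwards with m
      have : ((r * (m + (j + 1)).choose (j + 1) : ℕ) : ℝ) ≤ S (m + a) := by exact_mod_cast hA m
      push_cast at this
      exact div_nonneg (by linarith) (by positivity))
    have := nonneg_of_mul_nonneg_left this hp
    have : (e 1 : ℝ) ≤ a * e 0 := by linarith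
    exact_mod_cast this
  refine ⟨P1, fun hC => ?_, fun hD => le_antisymm P1 ?_⟩
  · have := le_of_tendsto_of_tendsto (hb_tendsto_choose j 0) lim1 (by
      filter_upwards [eventually_ge_atTop 1] with m hm
      gcongr
      obtain ⟨m, rfl⟩ : ∃ m', m = m' + 1 := ⟨m - 1, by omega⟩
      have h := hC (m + 1) hm
      have h2 : (m + 1 + (j + 1)).choose (j + 1) = (m + 1 + j).choose j + (m + 1 - 1 + (j + 1)).choose (j + 1) := by
        rw [← add_assoc (m + 1) j 1, Nat.choose_succ_succ]
        congr 2; omega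
      have h3 : r * (m + 1 + (j + 1)).choose (j + 1) + (m + 1 + j).choose j ≤ S (m + 1 + a) := by
        rw [add_mul, one_mul] at h; omega
      have h3 : ((r * (m + 1 + (j + 1)).choose (j + 1) + (m + 1 + j).choose j : ℕ) : ℝ) ≤ S (m + 1 + a) := by exact_mod_cast h3
      push_cast at h3 ⊢
      simp only [add_zero]
      linarith)
    have h1 : (1 : ℝ) ≤ a * e 0 - e 1 := by
      refine le_of_mul_le_mul_right ?_ hp
      rw [one_mul]; exact this
    have : (e 1 : ℝ) < a * e 0 := by linarith
    exact_mod_cast this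
  · have := le_of_tendsto lim1 (b := 0) (by
      filter_upwards with m
      have : (S (m + a) : ℝ) ≤ ((r * (m + (j + 1)).choose (j + 1) : ℕ) : ℝ) := by exact_mod_cast hD m
      push_cast at this
      exact div_nonpos_of_nonpos_of_nonneg (by linarith) (by positivity))
    have : (a * e 0 - e 1 : ℝ) ≤ 0 := by
      by_contra hh
      push Not at hh
      have := mul_pos hh hp
      linarith
    have : (a * e 0 : ℝ) ≤ e 1 := by linarith
    exact_mod_cast this

theorem hb_sum_multichoose (d m : ℕ) :
    ∑ j ∈ Finset.range (m + 1), d.multichoose j = (m + d).choose d := by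
  have : ∑ j ∈ Finset.range (m + 1), d.multichoose j = (d + 1).multichoose m := by
    induction m with
    | zero => simp
    | succ m ih => rw [Finset.sum_range_succ, ih, Nat.multichoose_succ_succ, add_comm]
  rw [this, Nat.multichoose_eq, show d + 1 + m - 1 = m + d by omega]
  exact Nat.choose_symm_add

theorem hb_finrank_restr (k : Type*) [Field k] (d m : ℕ) :
    Module.finrank k (MvPolynomial.restrictTotalDegree (Fin d) k m) = (m + d).choose d := by
  classical
  rw [MvPolynomial.restrictTotalDegree,
    Module.finrank_eq_nat_card_basis (MvPolynomial.basisRestrictSupport k _)]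
  have : {n : Fin d →₀ ℕ | (n.sum fun _ e => e) ≤ m} =
      ((Finset.range (m + 1)).biUnion (fun j => Finset.finsuppAntidiag Finset.univ j) : Finset (Fin d →₀ ℕ)) := by
    ext n
    simp [Finset.mem_finsuppAntidiag, Finsupp.sum_fintype]
  rw [this]
  simp only [SetLike.coe_sort_coe, Nat.card_eq_fintype_card, Fintype.card_coe]
  rw [Finset.card_biUnion, ← hb_sum_multichoose]
  · refine Finset.sum_congr rfl fun j _ => ?_
    rw [Finset.card_finsuppAntidiag_nat_eq_multichoose]; simp
  · intro i _ j _ hij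
    refine Finset.disjoint_left.2 ?_
    intro n hn hn'
    simp [Finset.mem_finsuppAntidiag] at hn hn'
    omega

section
variable {k : Type*} [Field k] {d : ℕ} {M : Type*} [AddCommGroup M]
    [Module (MvPolynomial (Fin d) k) M] [Module k M]
    [IsScalarTower k (MvPolynomial (Fin d) k) M]

/-- Combinations of the `v i` with coefficients of bounded degree. -/
noncomputable def hbComb {ι : Type*} [Fintype ι] (v : ι → M) (m : ℕ) :
    (ι → MvPolynomial.restrictTotalDegree (Fin d) k m) →ₗ[k] M where
  toFun g := ∑ i, (g i : MvPolynomial (Fin d) k) • v i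
  map_add' x y := by simp [add_smul, Finset.sum_add_distrib]
  map_smul' c x := by simp [Finset.smul_sum]

theorem hbComb_apply {ι : Type*} [Fintype ι] (v : ι → M) (m : ℕ)
    (g : ι → MvPolynomial.restrictTotalDegree (Fin d) k m) :
    hbComb v m g = ∑ i, (g i : MvPolynomial (Fin d) k) • v i := rfl

/-- The truncation. -/
def hbT (ℳ : ℕ → Submodule k M) (n : ℕ) : Submodule k M := (Finset.range (n + 1)).sup ℳ

theorem hb_proj (ℳ : ℕ → Submodule k M) (h : DirectSum.IsInternal (fun j => ℳ j)) :
    ∃ π : ℕ → M →ₗ[k] M, (∀ j x, π j x ∈ ℳ j) ∧ (∀ j, ∀ x ∈ ℳ j, π j x = x) ∧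
      (∀ i j, i ≠ j → ∀ x ∈ ℳ i, π j x = 0) := by
  classical
  let _ := DirectSum.IsInternal.chooseDecomposition ℳ h
  refine ⟨fun j => (ℳ j).subtype ∘ₗ DirectSum.component k ℕ (fun j => ℳ j) j ∘ₗ
    (DirectSum.decomposeLinearEquiv ℳ).toLinearMap, ?_, ?_, ?_⟩
  · intro j x; simp
  · intro j x hx
    exact DirectSum.decompose_of_mem_same ℳ hx
  · intro i j hij x hx
    exact DirectSum.decompose_of_mem_ne ℳ hx hij

theorem hb_smul_proj (ℳ : ℕ → Submodule k M) (hgr : IsGrading k d M ℳ)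
    (π : ℕ → M →ₗ[k] M) (h2 : ∀ j, ∀ x ∈ ℳ j, π j x = x)
    (h3 : ∀ i j, i ≠ j → ∀ x ∈ ℳ i, π j x = 0)
    (a m : ℕ) (r : MvPolynomial (Fin d) k) (w : M) (hw : w ∈ ℳ a) :
    π (m + a) (r • w) = MvPolynomial.homogeneousComponent m r • w := by
  have hmem : ∀ i, MvPolynomial.homogeneousComponent i r • w ∈ ℳ (i + a) := fun i =>
    hgr.2 i a _ (by
      rw [MvPolynomial.mem_homogeneousSubmodule]
      exact MvPolynomial.homogeneousComponent_isHomogeneous i r) w hw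
  conv_lhs => rw [← MvPolynomial.sum_homogeneousComponent r]
  rw [Finset.sum_smul, map_sum]
  by_cases hm : m ∈ Finset.range (r.totalDegree + 1)
  · rw [Finset.sum_eq_single_of_mem m hm, h2 _ _ (hmem m)]
    intro i _ hi
    exact h3 _ _ (by omega) _ (hmem i)
  · rw [Finset.sum_eq_zero]
    · rw [MvPolynomial.homogeneousComponent_eq_zero, zero_smul]
      simp at hm; omega
    · intro i hi
      exact h3 _ _ (by rintro h; apply hm; convert hi using 1; omega) _ (hmem i)

theorem hb_smul_mem (ℳ : ℕ → Submodule k M) (hgr : IsGrading k d M ℳ)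
    (a m : ℕ) (r : MvPolynomial (Fin d) k) (hr : r.totalDegree ≤ m) (w : M) (hw : w ∈ ℳ a) :
    r • w ∈ hbT ℳ (m + a) := by
  rw [← MvPolynomial.sum_homogeneousComponent r, Finset.sum_smul]
  refine Submodule.sum_mem _ fun i hi => ?_
  have hi := Finset.mem_range.1 hi
  have : ℳ (i + a) ≤ hbT ℳ (m + a) := Finset.le_sup (f := ℳ) (Finset.mem_range.2 (by omega))
  exact this (hgr.2 i a _ (by
      rw [MvPolynomial.mem_homogeneousSubmodule]
      exact MvPolynomial.homogeneousComponent_isHomogeneous i r) w hw)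

theorem hb_range_le (ℳ : ℕ → Submodule k M) (hgr : IsGrading k d M ℳ)
    (a m : ℕ) {ι : Type*} [Fintype ι] (v : ι → M) (hv : ∀ i, v i ∈ ℳ a) :
    LinearMap.range (hbComb (k := k) (d := d) v m) ≤ hbT ℳ (m + a) := by
  rintro _ ⟨g, rfl⟩
  rw [hbComb_apply]
  exact Submodule.sum_mem _ fun i _ => hb_smul_mem ℳ hgr a m _
    ((MvPolynomial.mem_restrictTotalDegree _ _ _).1 (g i).2) _ (hv i)

theorem hb_le_range (ℳ : ℕ → Submodule k M) (hgr : IsGrading k d M ℳ)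
    (a m : ℕ) (hlow : ∀ j < a, ℳ j = ⊥) {ι : Type*} [Fintype ι] (v : ι → M) (hv : ∀ i, v i ∈ ℳ a)
    (hs : Submodule.span (MvPolynomial (Fin d) k) (Set.range v) = ⊤) :
    hbT ℳ (m + a) ≤ LinearMap.range (hbComb (k := k) (d := d) v m) := by
  obtain ⟨π, h1, h2, h3⟩ := hb_proj ℳ hgr.1
  refine Finset.sup_le fun n hn => ?_
  have hn := Finset.mem_range.1 hn
  by_cases hna : n < a
  · rw [hlow n hna]; exact bot_le
  obtain ⟨p, rfl⟩ : ∃ p, n = p + a := ⟨n - a, by omega⟩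
  intro x hx
  have hx' : x ∈ Submodule.span (MvPolynomial (Fin d) k) (Set.range v) := by rw [hs]; trivial
  obtain ⟨c, hc⟩ := (Submodule.mem_span_range_iff_exists_fun _).1 hx'
  refine ⟨fun i => ⟨MvPolynomial.homogeneousComponent p (c i), ?_⟩, ?_⟩
  · rw [MvPolynomial.mem_restrictTotalDegree]
    exact (MvPolynomial.homogeneousComponent_isHomogeneous p (c i)).totalDegree_le.trans (by omega)
  · rw [hbComb_apply, ← h2 _ x hx, ← hc, map_sum]
    refine Finset.sum_congr rfl fun i _ => ?_
    rw [hb_smul_proj ℳ hgr π h2 h3 a p _ _ (hv i)]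

theorem hb_finrank_T (ℳ : ℕ → Submodule k M) (h : DirectSum.IsInternal (fun j => ℳ j))
    (hf : ∀ n, FiniteDimensional k (hbT ℳ n)) (n : ℕ) :
    Module.finrank k (hbT ℳ n) = ∑ j ∈ Finset.range (n + 1), Module.finrank k (ℳ j) := by
  obtain ⟨π, h1, h2, h3⟩ := hb_proj ℳ h
  have hfj : ∀ n, FiniteDimensional k (ℳ n) := fun n =>
    Submodule.finiteDimensional_of_le (S₂ := hbT ℳ n)
      (Finset.le_sup (f := ℳ) (Finset.mem_range.2 (Nat.lt_succ_self n)) : ℳ n ≤ hbT ℳ n)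
  induction n with
  | zero =>
    have : hbT ℳ 0 = ℳ 0 := by simp [hbT]
    rw [this]; simp
  | succ n ih =>
    rw [Finset.sum_range_succ, ← ih]
    have e : hbT ℳ (n + 1) = hbT ℳ n ⊔ ℳ (n + 1) := by
      rw [hbT, Finset.range_add_one, Finset.sup_insert, sup_comm]; rfl
    have hT : hbT ℳ n ≤ LinearMap.ker (π (n + 1)) := by
      refine Finset.sup_le fun i hi x hx => ?_
      have hi := Finset.mem_range.1 hi
      exact h3 i (n + 1) (by omega) x hx
    have hd : hbT ℳ n ⊓ ℳ (n + 1) = ⊥ := by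
      rw [eq_bot_iff]
      rintro x ⟨hx, hx'⟩
      have := hT hx
      rw [LinearMap.mem_ker, h2 _ x hx'] at this
      simpa using this
    have := Submodule.finrank_sup_add_finrank_inf_eq (hbT ℳ n) (ℳ (n + 1))
    rw [hd, finrank_bot, add_zero] at this
    rw [e, this]

theorem hbComb_inj {ι : Type*} [Fintype ι] (v : ι → M)
    (hv : LinearIndependent (MvPolynomial (Fin d) k) v) (m : ℕ) :
    Function.Injective (hbComb (k := k) (d := d) v m) := by
  rw [injective_iff_map_eq_zero]
  intro g hg
  rw [hbComb_apply] at hg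
  have := Fintype.linearIndependent_iff.1 hv _ hg
  ext1 i
  exact Subtype.ext (this i)

theorem hbComb_finrank_dom (ι : Type*) [Fintype ι] (m : ℕ) :
    Module.finrank k (ι → MvPolynomial.restrictTotalDegree (Fin d) k m) =
      Fintype.card ι * (m + d).choose d := by
  rw [Module.finrank_pi_fintype]
  simp [hb_finrank_restr]

/-- The colon ideal lies in a proper principal ideal. -/
theorem hb_colon [NoZeroSMulDivisors (MvPolynomial (Fin d) k) M] {ι : Type*} [Fintype ι] (v : ι → M)
    (hv : LinearIndependent (MvPolynomial (Fin d) k) v) (w : M)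
    (hw : w ∉ Submodule.span (MvPolynomial (Fin d) k) (Set.range v))
    (f : MvPolynomial (Fin d) k) (hf : f ≠ 0)
    (hfw : f • w ∈ Submodule.span (MvPolynomial (Fin d) k) (Set.range v)) :
    ∃ q : MvPolynomial (Fin d) k, q ≠ 0 ∧ 1 ≤ q.totalDegree ∧
      ∀ g, g • w ∈ Submodule.span (MvPolynomial (Fin d) k) (Set.range v) → q ∣ g := by
  obtain ⟨c, hc⟩ := (Submodule.mem_span_range_iff_exists_fun _).1 hfw
  have : ∃ i, ¬ f ∣ c i := by
    by_contra hcon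
    push Not at hcon
    choose b hb using hcon
    apply hw
    have h0 : f • (w - ∑ i, b i • v i) = 0 := by
      rw [smul_sub, ← hc, Finset.smul_sum, sub_eq_zero]
      refine Finset.sum_congr rfl fun i _ => ?_
      rw [hb i, mul_smul]
    have h0 := (smul_eq_zero.1 h0).resolve_left hf
    rw [sub_eq_zero.1 h0]
    exact Submodule.sum_mem _ fun i _ => Submodule.smul_mem _ _ (Submodule.subset_span ⟨i, rfl⟩)
  obtain ⟨i, hi⟩ := this
  obtain ⟨q, p, c', hrel, hq, hp⟩ := UniqueFactorizationMonoid.exists_reduced_factors f hf (c i)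
  have hq0 : q ≠ 0 := by rintro rfl; apply hf; rw [← hq, mul_zero]
  have hc0 : c' ≠ 0 := by rintro rfl; apply hf; rw [← hq, zero_mul]
  refine ⟨q, hq0, ?_, ?_⟩
  · by_contra hcon
    have h0 : q.totalDegree = 0 := by omega
    rw [MvPolynomial.totalDegree_eq_zero_iff_eq_C] at h0
    apply hi
    have : IsUnit q := by
      rw [h0]
      refine IsUnit.map _ (isUnit_iff_ne_zero.2 ?_)
      intro h; apply hq0; rw [h0, h, map_zero]
    rw [← hq, ← hp]
    exact mul_dvd_mul_left _ this.dvd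
  · intro g hg
    obtain ⟨b, hb⟩ := (Submodule.mem_span_range_iff_exists_fun _).1 hg
    have h0 : ∑ j, (g * c j - f * b j) • v j = 0 := by
      have e1 : ∑ j, (g * c j) • v j = (g * f) • w := by
        rw [mul_smul, ← hc, Finset.smul_sum]; simp [mul_smul]
      have e2 : ∑ j, (f * b j) • v j = (f * g) • w := by
        rw [mul_smul, ← hb, Finset.smul_sum]; simp [mul_smul]
      simp only [sub_smul, Finset.sum_sub_distrib]
      rw [e1, e2, mul_comm, sub_self]
    have h1 := Fintype.linearIndependent_iff.1 hv _ h0 i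
    have h2 : c' * (g * p) = c' * (q * b i) := by
      rw [← hq, ← hp] at h1
      linear_combination h1
    have h3 := mul_left_cancel₀ hc0 h2
    exact hrel.dvd_of_dvd_mul_right ⟨b i, h3⟩

theorem hb_strict [NoZeroSMulDivisors (MvPolynomial (Fin d) k) M]
    (ℳ : ℕ → Submodule k M) (hgr : IsGrading k d M ℳ) (a : ℕ)
    (hfin : ∀ n, FiniteDimensional k (hbT ℳ n)) {ι : Type*} [Fintype ι] (v : ι → M)
    (hva : ∀ i, v i ∈ ℳ a)
    (hv : LinearIndependent (MvPolynomial (Fin d) k) v) (w : M) (hwa : w ∈ ℳ a)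
    (hw : w ∉ Submodule.span (MvPolynomial (Fin d) k) (Set.range v))
    (f : MvPolynomial (Fin d) k) (hf : f ≠ 0)
    (hfw : f • w ∈ Submodule.span (MvPolynomial (Fin d) k) (Set.range v)) (m : ℕ) (hm : 1 ≤ m) :
    (Fintype.card ι + 1) * (m + d).choose d ≤
      Module.finrank k (hbT ℳ (m + a)) + (m - 1 + d).choose d := by
  obtain ⟨q, hq0, hq1, hq⟩ := hb_colon v hv w hw f hf hfw
  have := hfin (m + a)
  let v' : Option ι → M := fun o => o.elim w v
  let Φ := hbComb (k := k) (d := d) v' m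
  have hrk := LinearMap.finrank_range_add_finrank_ker Φ
  rw [hbComb_finrank_dom, Fintype.card_option] at hrk
  have hr : Module.finrank k (LinearMap.range Φ) ≤ Module.finrank k (hbT ℳ (m + a)) :=
    Submodule.finrank_mono (hb_range_le ℳ hgr a m v' (by
      rintro (_ | i)
      · exact hwa
      · exact hva i))
  let N : Submodule k (MvPolynomial (Fin d) k) :=
    (MvPolynomial.restrictTotalDegree (Fin d) k (m - 1)).map (LinearMap.mulLeft k q)
  have hN : Module.finrank k N ≤ (m - 1 + d).choose d := by
    rw [← hb_finrank_restr k d (m - 1)]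
    exact Submodule.finrank_map_le _ _
  have hk : Module.finrank k (LinearMap.ker Φ) ≤ Module.finrank k N := by
    have key : ∀ g ∈ LinearMap.ker Φ, (g none : MvPolynomial (Fin d) k) • w +
        ∑ i, (g (some i) : MvPolynomial (Fin d) k) • v i = 0 := by
      intro g hg
      rw [LinearMap.mem_ker] at hg
      change hbComb v' m g = 0 at hg
      rw [hbComb_apply, Fintype.sum_option] at hg
      exact hg
    let θ : LinearMap.ker Φ →ₗ[k] N := LinearMap.codRestrict N
      ((MvPolynomial.restrictTotalDegree (Fin d) k m).subtype ∘ₗ LinearMap.proj none ∘ₗ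
        (LinearMap.ker Φ).subtype) (by
        rintro ⟨g, hg⟩
        have hg' := key g hg
        have hdvd : q ∣ (g none : MvPolynomial (Fin d) k) := by
          apply hq
          rw [eq_neg_of_add_eq_zero_left hg']
          exact Submodule.neg_mem _ (Submodule.sum_mem _ fun i _ =>
            Submodule.smul_mem _ _ (Submodule.subset_span ⟨i, rfl⟩))
        obtain ⟨h, hh⟩ := hdvd
        refine ⟨h, ?_, hh.symm⟩
        rw [SetLike.mem_coe, MvPolynomial.mem_restrictTotalDegree]
        by_cases h0 : h = 0
        · simp [h0]
        have := (MvPolynomial.mem_restrictTotalDegree _ _ _).1 (g none).2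
        rw [hh, MvPolynomial.totalDegree_mul_of_isDomain hq0 h0] at this
        omega)
    refine LinearMap.finrank_le_finrank_of_injective (f := θ) ?_
    rw [injective_iff_map_eq_zero]
    rintro ⟨g, hg⟩ h0
    have hg' := key g hg
    have h0 : (g none : MvPolynomial (Fin d) k) = 0 := congrArg Subtype.val h0
    rw [h0, zero_smul, zero_add] at hg'
    have := Fintype.linearIndependent_iff.1 hv _ hg'
    apply Subtype.ext
    funext o
    apply Subtype.ext
    cases o with
    | none => exact h0
    | some i => exact this i
  omega

theorem hb_upper [NoZeroSMulDivisors (MvPolynomial (Fin d) k) M] {ι κ : Type*} [Fintype ι] [Fintype κ]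
    (v : ι → M) (u : κ → M) (f : MvPolynomial (Fin d) k) (hf : f ≠ 0)
    (hfu : ∀ j, f • u j ∈ Submodule.span (MvPolynomial (Fin d) k) (Set.range v)) :
    ∃ δ, ∀ m, Module.finrank k (LinearMap.range (hbComb (k := k) (d := d) u m)) ≤
      Fintype.card ι * (m + δ + d).choose d := by
  have : ∀ j, ∃ c : ι → MvPolynomial (Fin d) k, ∑ i, c i • v i = f • u j := fun j =>
    (Submodule.mem_span_range_iff_exists_fun _).1 (hfu j)
  choose c hc using this
  let δ := Finset.univ.sup fun x : κ × ι => (c x.1 x.2).totalDegree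
  have hδ : ∀ j i, (c j i).totalDegree ≤ δ := fun j i =>
    Finset.le_sup (f := fun x : κ × ι => (c x.1 x.2).totalDegree) (Finset.mem_univ (j, i))
  refine ⟨δ, fun m => ?_⟩
  let μ : M →ₗ[k] M := (LinearMap.lsmul (MvPolynomial (Fin d) k) M f).restrictScalars k
  have hμ : Function.Injective μ := by
    rw [injective_iff_map_eq_zero]
    intro x hx
    exact (smul_eq_zero.1 (show f • x = 0 from hx)).resolve_left hf
  have h1 : (LinearMap.range (hbComb (k := k) (d := d) u m)).map μ ≤
      LinearMap.range (hbComb (k := k) (d := d) v (m + δ)) := by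
    rintro _ ⟨_, ⟨g, rfl⟩, rfl⟩
    refine ⟨fun i => ⟨∑ j, g j * c j i, ?_⟩, ?_⟩
    · refine Submodule.sum_mem _ fun j _ => ?_
      rw [MvPolynomial.mem_restrictTotalDegree]
      exact (MvPolynomial.totalDegree_mul _ _).trans (add_le_add
        ((MvPolynomial.mem_restrictTotalDegree _ _ _).1 (g j).2) (hδ j i))
    · change _ = f • hbComb u m g
      rw [hbComb_apply, hbComb_apply, Finset.smul_sum]
      simp only [Finset.sum_smul]
      rw [Finset.sum_comm]
      refine Finset.sum_congr rfl fun j _ => ?_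
      rw [smul_comm, ← hc, Finset.smul_sum]
      simp [mul_smul]
  have h2 := Submodule.finrank_mono h1
  rw [← (Submodule.equivMapOfInjective μ hμ _).finrank_eq] at h2
  refine h2.trans ?_
  rw [← hbComb_finrank_dom (k := k)]
  exact LinearMap.finrank_range_le _

end

theorem hb_free {k : Type*} [Field k] {d : ℕ} {M : Type*} [AddCommGroup M]
    [Module (MvPolynomial (Fin d) k) M] [Module k M]
    [IsScalarTower k (MvPolynomial (Fin d) k) M] [Module.Finite (MvPolynomial (Fin d) k) M]
    [Module.Free (MvPolynomial (Fin d) k) M]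
    (ℳ : ℕ → Submodule k M) (hgr : IsGrading k d M ℳ) (a : ℕ)
    {κ : Type*} [Fintype κ] (u : κ → M) (hu : ∀ i, u i ∈ ℳ a)
    (hs : Submodule.span (MvPolynomial (Fin d) k) (Set.range u) = ⊤) :
    Module.finrank k (ℳ a) ≤ Module.finrank (MvPolynomial (Fin d) k) M := by
  obtain ⟨π, h1, h2, h3⟩ := hb_proj ℳ hgr.1
  let B := Module.Free.chooseBasis (MvPolynomial (Fin d) k) M
  let φ : M →ₗ[k] (Module.Free.ChooseBasisIndex (MvPolynomial (Fin d) k) M → k) :=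
    { toFun := fun x i => MvPolynomial.constantCoeff (B.repr x i)
      map_add' := by intro x y; funext i; simp
      map_smul' := by
        intro c x; funext i
        rw [← algebraMap_smul (MvPolynomial (Fin d) k) c x]
        simp [MvPolynomial.algebraMap_eq] }
  have hinj : Function.Injective (φ ∘ₗ (ℳ a).subtype) := by
    rw [injective_iff_map_eq_zero]
    rintro ⟨x, hx⟩ h0
    have h0 : ∀ i, MvPolynomial.constantCoeff (B.repr x i) = 0 := fun i => congrFun h0 i
    apply Subtype.ext
    change x = 0
    have e : π (0 + a) x = x := by rw [zero_add]; exact h2 a x hx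
    rw [← e]
    conv_lhs => rw [← B.sum_repr x]
    rw [map_sum]
    refine Finset.sum_eq_zero fun i _ => ?_
    have hB : B i ∈ Submodule.span (MvPolynomial (Fin d) k) (Set.range u) := by rw [hs]; trivial
    obtain ⟨c, hc⟩ := (Submodule.mem_span_range_iff_exists_fun _).1 hB
    rw [← hc, Finset.smul_sum, map_sum]
    refine Finset.sum_eq_zero fun j _ => ?_
    rw [← mul_smul, hb_smul_proj ℳ hgr π h2 h3 a 0 _ _ (hu j),
      MvPolynomial.homogeneousComponent_zero, ← MvPolynomial.constantCoeff_eq, map_mul, h0 i]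
    simp
  have := LinearMap.finrank_le_finrank_of_injective hinj
  rw [Module.finrank_eq_card_chooseBasisIndex (MvPolynomial (Fin d) k) M]
  simpa using this

/-- **Corollary 5.5.** Let `R = k[x₁, …, x_d]`, `d ≥ 2`, be a polynomial ring over a field
`k` and let `M` be a nonzero finitely generated graded `R`-module generated in degree
`a ≥ 0`.  If `M` is torsion-free, then `e₁(M) ≤ a·e₀(M)`, with equality if and only if `M`
is a free `R`-module. -/
theorem graded_e1_le_a_e0 (k : Type*) [Field k] (d : ℕ) (hd : 2 ≤ d)
    {M : Type*} [AddCommGroup M] [Module (MvPolynomial (Fin d) k) M] [Module k M]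
    [IsScalarTower k (MvPolynomial (Fin d) k) M]
    [Module.Finite (MvPolynomial (Fin d) k) M] [Nontrivial M]
    [NoZeroSMulDivisors (MvPolynomial (Fin d) k) M]
    (ℳ : ℕ → Submodule k M) (hgr : IsGrading k d M ℳ)
    (a : ℕ)
    (hgen : Submodule.span (MvPolynomial (Fin d) k) (ℳ a : Set M) = ⊤)
    (hlow : ∀ j < a, ℳ j = ⊥)
    (e : ℕ → ℤ) (he : IsHilbertPolyGraded k ℳ d e) :
    e 1 ≤ (a : ℤ) * e 0 ∧
      (e 1 = (a : ℤ) * e 0 ↔ Module.Free (MvPolynomial (Fin d) k) M) := by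
  classical
  have hgenFG : (Submodule.span (MvPolynomial (Fin d) k) (ℳ a : Set M)).FG := by
    rw [hgen]; exact Module.Finite.fg_top
  obtain ⟨t, hta, htspan⟩ := (Submodule.fg_span_iff_fg_span_finset_subset _).1 hgenFG
  let u : t → M := fun x => x.1
  have hu : ∀ i, u i ∈ ℳ a := fun i => hta i.2
  have hus : Submodule.span (MvPolynomial (Fin d) k) (Set.range u) = ⊤ := by
    rw [show Set.range u = (t : Set M) by simp [u], ← htspan, hgen]
  have hfinA : ∀ m, FiniteDimensional k (hbT ℳ (m + a)) := fun m =>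
    Submodule.finiteDimensional_of_le (hb_le_range ℳ hgr a m hlow u hu hus)
  have hfin : ∀ n, FiniteDimensional k (hbT ℳ n) := fun n => by
    have := hfinA n
    exact Submodule.finiteDimensional_of_le (S₂ := hbT ℳ (n + a))
      (Finset.sup_mono (Finset.range_mono (by omega)))
  have hfina : FiniteDimensional k (ℳ a) := by
    have := hfin a
    exact Submodule.finiteDimensional_of_le (S₂ := hbT ℳ a)
      (Finset.le_sup (f := ℳ) (Finset.mem_range.2 (Nat.lt_succ_self a)))
  obtain ⟨s, hsind, hsmax⟩ := exists_maximal_linearIndepOn (MvPolynomial (Fin d) k)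
    (fun x : ℳ a => (x : M))
  let v : s → M := fun x => (x.1 : M)
  have hv : LinearIndependent (MvPolynomial (Fin d) k) v := hsind
  have hva : ∀ i, v i ∈ ℳ a := fun i => i.1.2
  have : Finite s := hv.finite_of_isNoetherian
  have : Fintype s := Fintype.ofFinite s
  have himg : (fun x : ℳ a => (x : M)) '' s = Set.range v := by
    rw [Set.image_eq_range]
  rw [himg] at hsmax
  have htors : ∀ w ∈ ℳ a, ∃ f : MvPolynomial (Fin d) k, f ≠ 0 ∧
      f • w ∈ Submodule.span (MvPolynomial (Fin d) k) (Set.range v) := by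
    intro w hw
    by_cases hws : (⟨w, hw⟩ : ℳ a) ∈ s
    · exact ⟨1, one_ne_zero, by rw [one_smul]; exact Submodule.subset_span ⟨⟨_, hws⟩, rfl⟩⟩
    · exact hsmax _ hws
  choose f hf0 hf using fun i : t => htors (u i) (hu i)
  have hF0 : ∏ i, f i ≠ 0 := Finset.prod_ne_zero_iff.2 fun i _ => hf0 i
  have hF : ∀ i, (∏ i, f i) • u i ∈ Submodule.span (MvPolynomial (Fin d) k) (Set.range v) := by
    intro i
    rw [← Finset.prod_erase_mul _ _ (Finset.mem_univ i), mul_smul]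
    exact Submodule.smul_mem _ _ (hf i)
  obtain ⟨δ, hδ⟩ := hb_upper v u (∏ i, f i) hF0 hF
  have hA : ∀ m, Fintype.card s * (m + d).choose d ≤ Module.finrank k (hbT ℳ (m + a)) := by
    intro m
    have := hfin (m + a)
    rw [← hbComb_finrank_dom (k := k), ← LinearMap.finrank_range_of_inj (hbComb_inj v hv m)]
    exact Submodule.finrank_mono (hb_range_le ℳ hgr a m v hva)
  have hB : ∀ m, Module.finrank k (hbT ℳ (m + a)) ≤ Fintype.card s * (m + δ + d).choose d :=
    fun m => (Submodule.finrank_mono (hb_le_range ℳ hgr a m hlow u hu hus)).trans (hδ m)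
  obtain ⟨n₀, hn₀⟩ := he
  obtain ⟨P1, P2, P3⟩ := hb_asymp d hd a (Fintype.card s) δ e
    (fun n => Module.finrank k (hbT ℳ n)) ⟨n₀, fun n hn => by
      rw [← hn₀ n hn, hb_finrank_T ℳ hgr.1 hfin n]; push_cast; rfl⟩ hA hB
  refine ⟨P1, ?_⟩
  by_cases hsp : Submodule.span (MvPolynomial (Fin d) k) (Set.range v) = ⊤
  · refine ⟨fun _ => Module.Free.of_basis (Module.Basis.mk hv hsp.ge), fun _ => P3 fun m => ?_⟩
    rw [← hbComb_finrank_dom (k := k)]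
    exact (Submodule.finrank_mono (hb_le_range ℳ hgr a m hlow v hva hsp)).trans
      (LinearMap.finrank_range_le _)
  · have hex : ∃ w ∈ ℳ a, w ∉ Submodule.span (MvPolynomial (Fin d) k) (Set.range v) := by
      by_contra hcon
      push Not at hcon
      apply hsp
      rw [eq_top_iff, ← hgen, Submodule.span_le]
      exact hcon
    obtain ⟨w, hwa, hw⟩ := hex
    obtain ⟨g, hg0, hg⟩ := htors w hwa
    have hlt := P2 fun m hm => hb_strict ℳ hgr a hfin v hva hv w hwa hw g hg0 hg m hm
    refine ⟨fun h => absurd h hlt.ne, fun hfree => absurd hw ?_⟩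
    push Not
    have d1 := hb_free ℳ hgr a u hu hus
    have d2 : Module.finrank (MvPolynomial (Fin d) k) M ≤ Fintype.card s := by
      have hall : ∀ x : M, (∏ i, f i) • x ∈
          Submodule.span (MvPolynomial (Fin d) k) (Set.range v) := by
        intro x
        have hx : x ∈ Submodule.span (MvPolynomial (Fin d) k) (Set.range u) := by
          rw [hus]; trivial
        obtain ⟨c, rfl⟩ := (Submodule.mem_span_range_iff_exists_fun _).1 hx
        rw [Finset.smul_sum]
        refine Submodule.sum_mem _ fun i _ => ?_
        rw [smul_comm]
        exact Submodule.smul_mem _ _ (hF i)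
      rw [← finrank_span_eq_card hv]
      refine LinearMap.finrank_le_finrank_of_injective
        (f := LinearMap.codRestrict _ (LinearMap.lsmul (MvPolynomial (Fin d) k) M (∏ i, f i)) hall)
        ?_
      rw [injective_iff_map_eq_zero]
      intro x hx
      have hx : (∏ i, f i) • x = 0 := congrArg Subtype.val hx
      exact (smul_eq_zero.1 hx).resolve_left hF0
    have hvk : LinearIndependent k v := by
      refine hv.restrict_scalars ?_
      intro x y hxy
      have hxy : x • (1 : MvPolynomial (Fin d) k) = y • (1 : MvPolynomial (Fin d) k) := hxy
      rw [← MvPolynomial.C_1, MvPolynomial.smul_eq_C_mul, MvPolynomial.smul_eq_C_mul] at hxy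
      simpa using hxy
    have hle : Submodule.span k (Set.range v) ≤ ℳ a := by
      rw [Submodule.span_le]; rintro _ ⟨i, rfl⟩; exact hva i
    have heq := Submodule.eq_of_le_of_finrank_le hle (by
      rw [finrank_span_eq_card hvk]; exact d1.trans d2)
    rw [← heq] at hwa
    exact Submodule.span_subset_span k (MvPolynomial (Fin d) k) _ hwa
end
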